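/- arXiv:math/9901146 — 2 statements merged into one kernel-verified Lean document; each statement's English description precedes it below -/
import Mathlib

section
/- There is exactly one C² function G : ℝ × ℝ × [0, 1/m) → ℝ solving ∂_τ G = (1/2)(∂_σ G)² with G(σ,α,0) = R(σ,α); this G is C^∞ and 2π-periodic in α. Moreover, for every τ ∈ [0, 1/m) and every α, the map σ ↦ σ − τ·∂_σR(σ,α) is a C^∞ diffeomorphism of ℝ, and ∂_σG(σ − τ·∂_σR(σ,α), α, τ) = ∂_σR(σ,α) for all (σ,α) ∈ ℝ² and τ ∈ [0, 1/m). -/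
noncomputable section

/-- Partial derivative in coordinate `i` (0 = σ, 1 = α, 2 = τ) of a function on `ℝ × ℝ × ℝ`. -/
def pd (i : Fin 3) (f : ℝ × ℝ × ℝ → ℝ) (p : ℝ × ℝ × ℝ) : ℝ :=
  if i = 0 then deriv (fun s => f (s, p.2.1, p.2.2)) p.1
  else if i = 1 then deriv (fun s => f (p.1, s, p.2.2)) p.2.1
  else deriv (fun s => f (p.1, p.2.1, s)) p.2.2

/-- `∂_σ² R (σ, α)`. -/
def d2R (R : ℝ → ℝ → ℝ) (σ α : ℝ) : ℝ := iteratedDeriv 2 (fun σ' => R σ' α) σ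

/-- `m = sup ∂_σ² R`. -/
def mOf (R : ℝ → ℝ → ℝ) : ℝ := sSup (Set.range fun p : ℝ × ℝ => d2R R p.1 p.2)

/-- The domain `ℝ × ℝ × [0, 1/m)`. -/
def burgersDom (R : ℝ → ℝ → ℝ) : Set (ℝ × ℝ × ℝ) :=
  {p | 0 ≤ p.2.2 ∧ p.2.2 < (mOf R)⁻¹}

/-- `G` is a `C²` solution of `∂_τ G = ½ (∂_σ G)²` on `ℝ × ℝ × [0, 1/m)` with `G(·,·,0) = R`.
(Smoothness is required on `{τ < 1/m}` so that the displayed derivatives are honest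
one-sided derivatives on the closed side `τ = 0`; by Seeley extension this is
equivalent to being `C²` on `ℝ × ℝ × [0, 1/m)`.) -/
structure IsBurgersSol (R : ℝ → ℝ → ℝ) (G : ℝ × ℝ × ℝ → ℝ) : Prop where
  smooth : ContDiffOn ℝ 2 G {p : ℝ × ℝ × ℝ | p.2.2 < (mOf R)⁻¹}
  eqn : ∀ p ∈ burgersDom R, pd 2 G p = (1 / 2) * (pd 0 G p) ^ 2
  init : ∀ σ α : ℝ, G (σ, α, 0) = R σ α

/-- All derivatives of (the uncurried) `R` are bounded. -/
def AllDerivBounded (R : ℝ → ℝ → ℝ) : Prop :=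
  ∀ n : ℕ, ∃ C : ℝ, ∀ p : ℝ × ℝ, ‖iteratedFDeriv ℝ n (fun q : ℝ × ℝ => R q.1 q.2) p‖ ≤ C

open Set Filter Topology
open scoped ContDiff

/-!
The method of characteristics. Along the line `t ↦ (σ - t ρ, α, t)` with `ρ = ∂_σR(σ,α)`, the
derivative `u = ∂_σG` of a `C²` solution satisfies `(u - ρ)' = (u - ρ) ∂_σu`, because
differentiating the equation gives `∂_τu = u ∂_σu`. Hence `u = ρ` along the line by Grönwall, so
`G = R(σ,α) - τ ρ² / 2` there, and these lines fill the domain: this is uniqueness.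

Conversely, `σ ↦ σ - τ ∂_σR(σ,α)` has derivative `1 - τ ∂_σ²R`, which for `-ε < τ < 1/m` is bounded
below by a positive constant. So it is a diffeomorphism, its inverse is smooth in all variables by
the implicit function theorem, and the displayed formula defines a smooth solution for
`-ε < τ < 1/m`. Reparametrizing the negative times by a smooth map into `(-ε, 0]` extends it to all
`τ < 1/m`.
-/

/-! ### Calculus -/

lemma bijective_of_forall_le_deriv {f : ℝ → ℝ} (hf : Differentiable ℝ f) {κ : ℝ} (hκ : 0 < κ)
    (hf' : ∀ x, κ ≤ deriv f x) : Function.Bijective f := by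
  have hgrowth := mul_sub_le_image_sub_of_le_deriv hf hf'
  refine ⟨(strictMono_of_deriv_pos fun x => hκ.trans_le (hf' x)).injective,
    hf.continuous.surjective ?_ ?_⟩
  · refine tendsto_atTop_mono' atTop ((eventually_ge_atTop 0).mono fun x hx => ?_)
      (tendsto_atTop_add_const_right _ (f 0) (tendsto_id.const_mul_atTop hκ))
    simpa [le_sub_iff_add_le] using hgrowth hx
  · refine tendsto_atBot_mono' atBot ((eventually_le_atBot 0).mono fun x hx => ?_)
      (tendsto_atBot_add_const_right _ (f 0) (tendsto_id.const_mul_atBot hκ))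
    have := hgrowth hx
    simp only [id]
    linarith

lemma contDiffAt_of_unique_implicit_solution {𝕜 E : Type*} [RCLike 𝕜] [NormedAddCommGroup E]
    [NormedSpace 𝕜 E] [CompleteSpace E] {n : ℕ∞ω} {f : E × 𝕜 → 𝕜} {g : E → 𝕜} {x : E} {f' : 𝕜}
    (hf : ContDiffAt 𝕜 n f (x, g x)) (hn : n ≠ 0)
    (hf' : HasDerivAt (fun y => f (x, y)) f' (g x)) (hf'0 : f' ≠ 0)
    (hunique : ∀ᶠ x' in 𝓝 x, ∀ y, f (x', y) = f (x, g x) → y = g x') : ContDiffAt 𝕜 n g x := by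
  have hpartial : fderiv 𝕜 f (x, g x) ∘L .inr 𝕜 E 𝕜 =
      ContinuousLinearEquiv.unitsEquivAut 𝕜 (Units.mk0 f' hf'0) := by
    ext
    have hline : HasDerivAt (fun y : 𝕜 => (x, y)) (0, 1) (g x) :=
      (hasDerivAt_const _ x).prodMk (hasDerivAt_id _)
    simpa using ((hf.differentiableAt hn).hasFDerivAt.comp_hasDerivAt _ hline).unique hf'
  have hinv : (fderiv 𝕜 f (x, g x) ∘L .inr 𝕜 E 𝕜).IsInvertible := ⟨_, hpartial.symm⟩
  refine (hf.contDiffAt_implicitFunction hn hinv).congr_of_eventuallyEq ?_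
  filter_upwards [hf.eventually_apply_implicitFunction hn hinv, hunique] with x' hx' hx'_unique
  exact (hx'_unique _ hx').symm

lemma hasDerivAt_fderiv_comp_apply {E F : Type*} [NormedAddCommGroup E] [NormedSpace ℝ E]
    [NormedAddCommGroup F] [NormedSpace ℝ F] {f : E → F} {γ : ℝ → E} {t : ℝ} {v : E}
    (hf : ContDiffAt ℝ 2 f (γ t)) (hγ : HasDerivAt γ v t) (w : E) :
    HasDerivAt (fun s => fderiv ℝ f (γ s) w) (fderiv ℝ (fderiv ℝ f) (γ t) v w) t := by
  have hf' : DifferentiableAt ℝ (fderiv ℝ f) (γ t) :=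
    (hf.fderiv_right (m := 1) (by norm_num)).differentiableAt one_ne_zero
  simpa using (hf'.hasFDerivAt.comp_hasDerivAt t hγ).clm_apply (hasDerivAt_const t w)

lemma eq_zero_of_hasDerivAt_mul_self {f k : ℝ → ℝ} {a b : ℝ} (hk : ContinuousOn k (Icc a b))
    (hf : ∀ t ∈ Icc a b, HasDerivAt f (k t * f t) t) (ha : f a = 0) :
    ∀ t ∈ Icc a b, f t = 0 := by
  obtain ⟨K, hK⟩ := isCompact_Icc.exists_bound_of_continuousOn hk
  refine eq_zero_of_abs_deriv_le_mul_abs_self_of_eq_zero_right (K := K)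
    (fun t ht => (hf t ht).continuousAt.continuousWithinAt)
    (fun t ht => (hf t (Ico_subset_Icc_self ht)).hasDerivWithinAt) ha fun t ht => ?_
  rw [norm_mul]
  gcongr
  exact hK t (Ico_subset_Icc_self ht)

lemma norm_iteratedDeriv_slice_le {E F : Type*} [NormedAddCommGroup E] [NormedSpace ℝ E]
    [NormedAddCommGroup F] [NormedSpace ℝ F] {n : ℕ} {f : ℝ × E → F} (hf : ContDiff ℝ n f)
    (x : ℝ) (y : E) :
    ‖iteratedDeriv n (fun s => f (s, y)) x‖ ≤ ‖iteratedFDeriv ℝ n f (x, y)‖ := by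
  have hslice : (fun s => f (s, y)) =
      (fun q => f (q + (0, y))) ∘ ContinuousLinearMap.inl ℝ ℝ E := by
    ext s; simp
  have hshift : ContDiff ℝ n fun q => f (q + (0, y)) := hf.comp (by fun_prop)
  rw [hslice, iteratedDeriv_eq_iteratedFDeriv,
    ContinuousLinearMap.iteratedFDeriv_comp_right _ hshift x le_rfl, iteratedFDeriv_comp_add_right]
  simpa using (iteratedFDeriv ℝ n f (x, y)).le_opNorm fun _ => (1, 0)

lemma exists_contDiff_eventuallyEq_id {ε : ℝ} (hε : 0 < ε) :
    ∃ c : ℝ → ℝ, ContDiff ℝ ∞ c ∧ (∀ t, 0 ≤ t → c =ᶠ[𝓝 t] id) ∧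
      ∀ t, -ε < c t ∧ c t ≤ max t 0 := by
  refine ⟨fun t => t * Real.smoothTransition (2 + 2 * t / ε),
    contDiff_id.mul (Real.smoothTransition.contDiff.comp (by fun_prop)), fun t ht => ?_,
    fun t => ?_⟩
  · filter_upwards [lt_mem_nhds (show -ε / 2 < t by linarith)] with s hs
    have : -1 ≤ 2 * s / ε := by rw [le_div_iff₀ hε]; linarith
    simp [Real.smoothTransition.one_of_one_le (show 1 ≤ 2 + 2 * s / ε by linarith)]
  · have hnonneg := Real.smoothTransition.nonneg (2 + 2 * t / ε)
    have hle_one := Real.smoothTransition.le_one (2 + 2 * t / ε)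
    rcases le_or_gt t (-ε) with ht | ht
    · have : 2 * t / ε ≤ -2 := by rw [div_le_iff₀ hε]; linarith
      simp [Real.smoothTransition.zero_of_nonpos (show 2 + 2 * t / ε ≤ 0 by linarith), hε]
    · rcases le_total t 0 with ht0 | ht0
      · exact ⟨by nlinarith, (mul_nonpos_of_nonpos_of_nonneg ht0 hnonneg).trans (le_max_right _ _)⟩
      · exact ⟨(neg_lt_zero.2 hε).trans_le (mul_nonneg ht0 hnonneg),
          (mul_le_of_le_one_right ht0 hle_one).trans (le_max_left _ _)⟩

lemma pd_zero_eq_fderiv {f : ℝ × ℝ × ℝ → ℝ} {p : ℝ × ℝ × ℝ} (hf : DifferentiableAt ℝ f p) :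
    pd 0 f p = fderiv ℝ f p (1, 0, 0) := by
  have hline : HasDerivAt (fun s : ℝ => (s, p.2.1, p.2.2)) (1, 0, 0) p.1 :=
    (hasDerivAt_id _).prodMk (hasDerivAt_const _ (p.2.1, p.2.2))
  simpa [pd, Function.comp_def] using (hf.hasFDerivAt.comp_hasDerivAt p.1 hline).deriv

lemma pd_two_eq_fderiv {f : ℝ × ℝ × ℝ → ℝ} {p : ℝ × ℝ × ℝ} (hf : DifferentiableAt ℝ f p) :
    pd 2 f p = fderiv ℝ f p (0, 0, 1) := by
  have hline : HasDerivAt (fun s : ℝ => (p.1, p.2.1, s)) (0, 0, 1) p.2.2 :=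
    (hasDerivAt_const _ p.1).prodMk ((hasDerivAt_const _ p.2.1).prodMk (hasDerivAt_id _))
  simpa [pd, Function.comp_def] using (hf.hasFDerivAt.comp_hasDerivAt p.2.2 hline).deriv

/-! ### Characteristics -/

/-- `∂_σR(σ, α)`. -/
def d1R (R : ℝ → ℝ → ℝ) (σ α : ℝ) : ℝ := deriv (fun σ' => R σ' α) σ

/-- The characteristic map at time `τ`: the position at time `τ` of the characteristic line issued
from `(σ, α)` at time `0`. -/
def charMap (R : ℝ → ℝ → ℝ) (τ α σ : ℝ) : ℝ := σ - τ * d1R R σ α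

/-- The value which a solution takes at time `τ` on the characteristic line issued from `(σ, α)`. -/
def charValue (R : ℝ → ℝ → ℝ) (τ α σ : ℝ) : ℝ := R σ α - τ / 2 * d1R R σ α ^ 2

/-- The foot at time `0` of the characteristic through `x` at time `τ`, that is, the inverse of
`charMap R τ α`; it is meaningful only when that map is bijective. -/
def charFoot (R : ℝ → ℝ → ℝ) (τ α : ℝ) : ℝ → ℝ := Function.invFun (charMap R τ α)

/-- The solution given by the method of characteristics, in the coordinates `(σ, α, τ)`. -/
def charSol (R : ℝ → ℝ → ℝ) (p : ℝ × ℝ × ℝ) : ℝ :=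
  charValue R p.2.2 p.2.1 (charFoot R p.2.2 p.2.1 p.1)

/-- A time, possibly negative, at which the characteristics have not focused: the derivative of the
characteristic map is bounded below by a positive constant. -/
def IsRegularTime (R : ℝ → ℝ → ℝ) (τ : ℝ) : Prop :=
  ∃ κ > 0, ∀ σ α, κ ≤ 1 - τ * d2R R σ α

lemma isRegularTime_zero (R : ℝ → ℝ → ℝ) : IsRegularTime R 0 := ⟨1, one_pos, by simp⟩

lemma bddBelow_range_d2R {R : ℝ → ℝ → ℝ} (hR : ContDiff ℝ 2 fun q : ℝ × ℝ => R q.1 q.2)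
    (hbd : AllDerivBounded R) : BddBelow (range fun p : ℝ × ℝ => d2R R p.1 p.2) := by
  obtain ⟨C, hC⟩ := hbd 2
  refine ⟨-C, forall_mem_range.2 fun p => neg_le_of_abs_le ?_⟩
  exact (norm_iteratedDeriv_slice_le (n := 2) hR p.1 p.2).trans (hC p)

lemma exists_forall_mem_Ioo_isRegularTime {R : ℝ → ℝ → ℝ}
    (hbelow : BddBelow (range fun p : ℝ × ℝ => d2R R p.1 p.2))
    (habove : BddAbove (range fun p : ℝ × ℝ => d2R R p.1 p.2)) (hm : 0 < mOf R) :
    ∃ ε > 0, ∀ τ ∈ Ioo (-ε) (mOf R)⁻¹, IsRegularTime R τ := by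
  obtain ⟨b, hb⟩ := hbelow
  have hlower : ∀ σ α, -(|b| + 1) ≤ d2R R σ α := fun σ α => by
    linarith [hb ⟨(σ, α), rfl⟩, neg_abs_le b]
  have hupper : ∀ σ α, d2R R σ α ≤ mOf R := fun σ α => le_csSup habove ⟨(σ, α), rfl⟩
  have hb_pos : 0 < |b| + 1 := by positivity
  refine ⟨(|b| + 1)⁻¹, inv_pos.2 hb_pos, fun τ ⟨hτ_lower, hτ_upper⟩ => ?_⟩
  rw [← one_div, lt_div_iff₀ hm] at hτ_upper
  rw [neg_lt, ← one_div, lt_div_iff₀ hb_pos] at hτ_lower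
  rcases le_total 0 τ with hτ | hτ
  · refine ⟨1 - τ * mOf R, sub_pos.2 hτ_upper, fun σ α => ?_⟩
    gcongr
    exact hupper σ α
  · refine ⟨1 - τ * -(|b| + 1), by linarith, fun σ α => ?_⟩
    linarith [mul_le_mul_of_nonpos_left (hlower σ α) hτ]

lemma hasDerivAt_charLine (R : ℝ → ℝ → ℝ) (σ α t : ℝ) :
    HasDerivAt (fun t => (charMap R t α σ, α, t)) (-d1R R σ α, 0, 1) t := by
  have hmap : HasDerivAt (fun t => charMap R t α σ) (-d1R R σ α) t :=
    (((hasDerivAt_id t).mul_const (d1R R σ α)).const_sub σ).congr_deriv (by ring)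
  exact hmap.prodMk ((hasDerivAt_const _ α).prodMk (hasDerivAt_id t))

section Smoothness

variable {R : ℝ → ℝ → ℝ} {n : ℕ∞ω}

lemma contDiff_d1R (hR : ContDiff ℝ (n + 1) fun q : ℝ × ℝ => R q.1 q.2) :
    ContDiff ℝ n fun q : ℝ × ℝ => d1R R q.1 q.2 :=
  ContDiff.fderiv_apply (f := fun (q : ℝ × ℝ) s => R s q.2) (m := n + 1)
    (hR.comp (contDiff_snd.prodMk (contDiff_snd.comp contDiff_fst))) contDiff_fst contDiff_const
    le_rfl

lemma contDiff_charMap (hR : ContDiff ℝ (n + 1) fun q : ℝ × ℝ => R q.1 q.2) :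
    ContDiff ℝ n fun q : (ℝ × ℝ × ℝ) × ℝ => charMap R q.1.2.2 q.1.2.1 q.2 := by
  have hr := (contDiff_d1R hR).comp
    (contDiff_snd.prodMk (by fun_prop : ContDiff ℝ n fun q : (ℝ × ℝ × ℝ) × ℝ => q.1.2.1))
  exact contDiff_snd.sub (ContDiff.mul (by fun_prop) hr)

lemma contDiff_charValue (hR : ContDiff ℝ (n + 1) fun q : ℝ × ℝ => R q.1 q.2) :
    ContDiff ℝ n fun q : (ℝ × ℝ × ℝ) × ℝ => charValue R q.1.2.2 q.1.2.1 q.2 := by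
  have hpair : ContDiff ℝ n fun q : (ℝ × ℝ × ℝ) × ℝ => (q.2, q.1.2.1) := by fun_prop
  exact ((hR.of_le le_self_add).comp hpair).sub
    (ContDiff.mul (by fun_prop) (((contDiff_d1R hR).comp hpair).pow 2))

end Smoothness

section RegularTimes

variable {R : ℝ → ℝ → ℝ} (hR : ContDiff ℝ 2 fun q : ℝ × ℝ => R q.1 q.2)
include hR

lemma hasDerivAt_slice (σ α : ℝ) : HasDerivAt (fun s => R s α) (d1R R σ α) σ :=
  ((hR.differentiable two_ne_zero).comp
    (differentiable_id.prodMk (differentiable_const α)) σ).hasDerivAt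

lemma hasDerivAt_d1R (σ α : ℝ) : HasDerivAt (fun s => d1R R s α) (d2R R σ α) σ := by
  have hr : Differentiable ℝ fun q : ℝ × ℝ => d1R R q.1 q.2 :=
    (contDiff_d1R (n := 1) (by simpa [one_add_one_eq_two] using hR)).differentiable one_ne_zero
  rw [d2R, iteratedDeriv_succ, iteratedDeriv_one]
  exact (hr.comp (differentiable_id.prodMk (differentiable_const α)) σ).hasDerivAt

lemma hasDerivAt_charMap (τ α σ : ℝ) :
    HasDerivAt (charMap R τ α) (1 - τ * d2R R σ α) σ :=
  (hasDerivAt_id σ).sub ((hasDerivAt_d1R hR σ α).const_mul τ)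

lemma bijective_charMap {τ : ℝ} (hτ : IsRegularTime R τ) (α : ℝ) :
    Function.Bijective (charMap R τ α) := by
  obtain ⟨κ, hκ, hle⟩ := hτ
  refine bijective_of_forall_le_deriv
    (fun σ => (hasDerivAt_charMap hR τ α σ).differentiableAt) hκ fun σ => ?_
  rw [(hasDerivAt_charMap hR τ α σ).deriv]
  exact hle σ α

lemma charMap_charFoot {τ : ℝ} (hτ : IsRegularTime R τ) (α x : ℝ) :
    charMap R τ α (charFoot R τ α x) = x :=
  Function.rightInverse_invFun (bijective_charMap hR hτ α).surjective x

lemma charFoot_charMap {τ : ℝ} (hτ : IsRegularTime R τ) (α σ : ℝ) :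
    charFoot R τ α (charMap R τ α σ) = σ :=
  Function.leftInverse_invFun (bijective_charMap hR hτ α).injective σ

-- Since `charValue` and `charMap` have differentials `ρ dσ - τ ρ dρ - ρ² dτ / 2` and
-- `dx = dσ - τ dρ - ρ dτ`, where `ρ = ∂_σR`, the former equals `ρ dx + ρ² dτ / 2`.
lemma hasDerivAt_charValue {α t k' x' : ℝ} {k y : ℝ → ℝ} (hy : DifferentiableAt ℝ y t)
    (hk : HasDerivAt k k' t) (hx : HasDerivAt (fun s => charMap R (k s) α (y s)) x' t) :
    HasDerivAt (fun s => charValue R (k s) α (y s))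
      (d1R R (y t) α * x' + d1R R (y t) α ^ 2 / 2 * k') t := by
  have hρ : HasDerivAt (fun s => d1R R (y s) α) (d2R R (y t) α * deriv y t) t :=
    (hasDerivAt_d1R hR (y t) α).comp t hy.hasDerivAt
  have hRy : HasDerivAt (fun s => R (y s) α) (d1R R (y t) α * deriv y t) t :=
    (hasDerivAt_slice hR (y t) α).comp t hy.hasDerivAt
  have hx'_eq := hx.unique (hy.hasDerivAt.sub (hk.mul hρ))
  refine (hRy.sub ((hk.div_const 2).mul (hρ.pow 2))).congr_deriv ?_
  simp only [hx'_eq, Pi.pow_apply]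
  ring

end RegularTimes

section CharSol

variable {R : ℝ → ℝ → ℝ} {n : ℕ∞ω} {p : ℝ × ℝ × ℝ}

lemma contDiffAt_charFoot (hn : 1 ≤ n)
    (hR : ContDiff ℝ (n + 1) fun q : ℝ × ℝ => R q.1 q.2)
    (hp : ∀ᶠ τ in 𝓝 p.2.2, IsRegularTime R τ) :
    ContDiffAt ℝ n (fun q : ℝ × ℝ × ℝ => charFoot R q.2.2 q.2.1 q.1) p := by
  have hR2 : ContDiff ℝ 2 fun q : ℝ × ℝ => R q.1 q.2 :=
    hR.of_le (one_add_one_eq_two (R := ℕ∞ω) ▸ by gcongr)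
  have hfoot {q : ℝ × ℝ × ℝ} (hq : IsRegularTime R q.2.2) :=
    charMap_charFoot hR2 hq q.2.1 q.1
  have hsmooth : ContDiff ℝ n fun q : (ℝ × ℝ × ℝ) × ℝ =>
      charMap R q.1.2.2 q.1.2.1 q.2 - q.1.1 := (contDiff_charMap hR).sub (by fun_prop)
  refine contDiffAt_of_unique_implicit_solution hsmooth.contDiffAt (by positivity)
    ((hasDerivAt_charMap hR2 p.2.2 p.2.1 _).sub_const p.1) ?_ ?_
  · obtain ⟨κ, hκ, hle⟩ := hp.self_of_nhds
    exact (hκ.trans_le (hle _ _)).ne'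
  · filter_upwards [(continuous_snd.snd.tendsto p).eventually hp] with q hq y hy
    rw [hfoot hp.self_of_nhds, sub_self, sub_eq_zero] at hy
    rw [← hy, charFoot_charMap hR2 hq]

lemma contDiffAt_charSol (hn : 1 ≤ n) (hR : ContDiff ℝ (n + 1) fun q : ℝ × ℝ => R q.1 q.2)
    (hp : ∀ᶠ τ in 𝓝 p.2.2, IsRegularTime R τ) : ContDiffAt ℝ n (charSol R) p :=
  (contDiff_charValue hR).contDiffAt.comp p (contDiffAt_id.prodMk (contDiffAt_charFoot hn hR hp))

lemma fderiv_charSol (hR : ContDiff ℝ 2 fun q : ℝ × ℝ => R q.1 q.2)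
    (hp : ∀ᶠ τ in 𝓝 p.2.2, IsRegularTime R τ) (v w : ℝ) :
    fderiv ℝ (charSol R) p (v, 0, w) =
      d1R R (charFoot R p.2.2 p.2.1 p.1) p.2.1 * v +
        d1R R (charFoot R p.2.2 p.2.1 p.1) p.2.1 ^ 2 / 2 * w := by
  have hR' : ContDiff ℝ (1 + 1) fun q : ℝ × ℝ => R q.1 q.2 := by
    simpa [one_add_one_eq_two] using hR
  obtain ⟨x, α, τ⟩ := p
  have hx : HasDerivAt (fun t => x + t * v) v 0 := by
    simpa using ((hasDerivAt_id (0 : ℝ)).mul_const v).const_add x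
  have hτ : HasDerivAt (fun t => τ + t * w) w 0 := by
    simpa using ((hasDerivAt_id (0 : ℝ)).mul_const w).const_add τ
  have hline : HasDerivAt (fun t => (x + t * v, α, τ + t * w)) (v, 0, w) 0 :=
    hx.prodMk ((hasDerivAt_const _ α).prodMk hτ)
  have hline0 : (x, α, τ) = (x + 0 * v, α, τ + 0 * w) := by simp
  have hfoot : DifferentiableAt ℝ (fun t => charFoot R (τ + t * w) α (x + t * v)) 0 :=
    (((contDiffAt_charFoot le_rfl hR' hp).differentiableAt one_ne_zero).hasFDerivAt
      |>.comp_hasDerivAt_of_eq (0 : ℝ) hline hline0).differentiableAt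
  have hmap : HasDerivAt
      (fun t => charMap R (τ + t * w) α (charFoot R (τ + t * w) α (x + t * v))) v 0 := by
    refine hx.congr_of_eventuallyEq ?_
    have hτ_tendsto := hτ.continuousAt.tendsto
    simp only [zero_mul, add_zero] at hτ_tendsto
    filter_upwards [hτ_tendsto.eventually hp] with t ht using charMap_charFoot hR ht α _
  have hsol := ((contDiffAt_charSol le_rfl hR' hp).differentiableAt one_ne_zero).hasFDerivAt
  rw [(hsol.comp_hasDerivAt_of_eq (0 : ℝ) hline hline0).unique
    (hasDerivAt_charValue hR hfoot hτ hmap)]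
  simp

lemma charSol_zero (hR : ContDiff ℝ 2 fun q : ℝ × ℝ => R q.1 q.2) (σ α : ℝ) :
    charSol R (σ, α, 0) = R σ α := by
  have hfoot : charFoot R 0 α σ = σ := by
    simpa [charMap] using charMap_charFoot hR (isRegularTime_zero R) α σ
  simp [charSol, charValue, hfoot]

lemma charSol_add_period {P : ℝ} (hP : ∀ σ α, R σ (α + P) = R σ α) (σ α τ : ℝ) :
    charSol R (σ, α + P, τ) = charSol R (σ, α, τ) := by
  have hρ (s : ℝ) : d1R R s (α + P) = d1R R s α := by simp only [d1R, hP]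
  have hmap : charMap R τ (α + P) = charMap R τ α := by ext s; simp only [charMap, hρ]
  simp only [charSol, charFoot, charValue, hmap, hP, hρ]

end CharSol

lemma exists_charMap_equiv {R : ℝ → ℝ → ℝ} (hR : ContDiff ℝ ∞ fun q : ℝ × ℝ => R q.1 q.2)
    {τ : ℝ} (hτ : ∀ᶠ τ' in 𝓝 τ, IsRegularTime R τ') (α : ℝ) :
    ∃ e : ℝ ≃ ℝ, (∀ σ, e σ = charMap R τ α σ) ∧
      ContDiff ℝ ∞ (e : ℝ → ℝ) ∧ ContDiff ℝ ∞ (e.symm : ℝ → ℝ) := by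
  have hR2 : ContDiff ℝ 2 fun q : ℝ × ℝ => R q.1 q.2 := contDiff_infty.1 hR 2
  have hmap : ContDiff ℝ ∞ (charMap R τ α) :=
    (contDiff_charMap (n := ∞) hR).comp
      (by fun_prop : ContDiff ℝ ∞ fun σ : ℝ => (((0, α, τ), σ) : (ℝ × ℝ × ℝ) × ℝ))
  have hfoot : ContDiff ℝ ∞ (charFoot R τ α) := contDiff_iff_contDiffAt.2 fun x =>
    ContDiffAt.comp (g := fun q : ℝ × ℝ × ℝ => charFoot R q.2.2 q.2.1 q.1)
      (f := fun x => (x, α, τ)) x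
      (contDiffAt_charFoot (n := ∞) (by exact_mod_cast le_top) hR hτ) (by fun_prop)
  exact ⟨⟨charMap R τ α, charFoot R τ α, charFoot_charMap hR2 hτ.self_of_nhds α,
    charMap_charFoot hR2 hτ.self_of_nhds α⟩, fun _ => rfl, hmap, hfoot⟩

/-! ### Existence -/

lemma exists_smooth_isBurgersSol {R : ℝ → ℝ → ℝ}
    (hR : ContDiff ℝ ∞ fun q : ℝ × ℝ => R q.1 q.2) {ε : ℝ} (hε : 0 < ε) (hm : 0 < mOf R)
    (hreg : ∀ τ ∈ Ioo (-ε) (mOf R)⁻¹, IsRegularTime R τ) :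
    ∃ G : ℝ × ℝ × ℝ → ℝ, IsBurgersSol R G ∧
      ContDiffOn ℝ ∞ G {p : ℝ × ℝ × ℝ | p.2.2 < (mOf R)⁻¹} ∧
      ∀ P, (∀ σ α, R σ (α + P) = R σ α) → ∀ σ α τ, G (σ, α + P, τ) = G (σ, α, τ) := by
  have hR2 : ContDiff ℝ 2 fun q : ℝ × ℝ => R q.1 q.2 := contDiff_infty.1 hR 2
  have hreg_nhds : ∀ τ ∈ Ioo (-ε) (mOf R)⁻¹, ∀ᶠ τ' in 𝓝 τ, IsRegularTime R τ' :=
    fun τ hτ => (isOpen_Ioo.eventually_mem hτ).mono hreg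
  have hsol_smooth : ∀ p : ℝ × ℝ × ℝ, p.2.2 ∈ Ioo (-ε) (mOf R)⁻¹ → ContDiffAt ℝ ∞ (charSol R) p :=
    fun p hp => contDiffAt_charSol (n := ∞) (by exact_mod_cast le_top) hR (hreg_nhds _ hp)
  obtain ⟨c, hc, hc_id, hc_bounds⟩ := exists_contDiff_eventuallyEq_id hε
  have hc_mem : ∀ t < (mOf R)⁻¹, c t ∈ Ioo (-ε) (mOf R)⁻¹ := fun t ht =>
    ⟨(hc_bounds t).1, (hc_bounds t).2.trans_lt (max_lt ht (inv_pos.2 hm))⟩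
  let G : ℝ × ℝ × ℝ → ℝ := fun p => charSol R (p.1, p.2.1, c p.2.2)
  have hG_smooth : ContDiffOn ℝ ∞ G {p | p.2.2 < (mOf R)⁻¹} := fun p hp =>
    (ContDiffAt.comp (f := fun q : ℝ × ℝ × ℝ => (q.1, q.2.1, c q.2.2)) p
      (hsol_smooth _ (hc_mem _ hp)) (by fun_prop)).contDiffWithinAt
  refine ⟨G, ⟨contDiffOn_infty.1 hG_smooth 2, fun p hp => ?_, fun σ α => ?_⟩,
    hG_smooth, fun P hP σ α τ => charSol_add_period hP σ α (c τ)⟩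
  · have hG_eq : G =ᶠ[𝓝 p] charSol R := by
      filter_upwards [(continuous_snd.snd.tendsto p).eventually (hc_id _ hp.1)] with q hq
      simp only [G, hq, id]
    have hp_mem : p.2.2 ∈ Ioo (-ε) (mOf R)⁻¹ := ⟨(neg_lt_zero.2 hε).trans_le hp.1, hp.2⟩
    have hG_diff : DifferentiableAt ℝ G p :=
      hG_eq.differentiableAt_iff.2 ((hsol_smooth p hp_mem).differentiableAt (by simp))
    rw [pd_zero_eq_fderiv hG_diff, pd_two_eq_fderiv hG_diff, hG_eq.fderiv_eq,
      fderiv_charSol hR2 (hreg_nhds _ hp_mem), fderiv_charSol hR2 (hreg_nhds _ hp_mem)]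
    ring
  · simpa [G, (hc_id 0 le_rfl).eq_of_nhds] using charSol_zero hR2 σ α

/-! ### Behaviour along characteristics -/

namespace IsBurgersSol

variable {R : ℝ → ℝ → ℝ} {G : ℝ × ℝ × ℝ → ℝ} {p : ℝ × ℝ × ℝ} {τ : ℝ}

lemma contDiffAt (hG : IsBurgersSol R G) (hp : p.2.2 < (mOf R)⁻¹) : ContDiffAt ℝ 2 G p :=
  hG.smooth.contDiffAt ((isOpen_lt (by fun_prop) (by fun_prop)).mem_nhds hp)

lemma differentiableAt (hG : IsBurgersSol R G) (hp : p.2.2 < (mOf R)⁻¹) :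
    DifferentiableAt ℝ G p :=
  (hG.contDiffAt hp).differentiableAt two_ne_zero

lemma fderiv_time (hG : IsBurgersSol R G) (hp : p ∈ burgersDom R) :
    fderiv ℝ G p (0, 0, 1) = 1 / 2 * fderiv ℝ G p (1, 0, 0) ^ 2 := by
  rw [← pd_two_eq_fderiv (hG.differentiableAt hp.2), ← pd_zero_eq_fderiv (hG.differentiableAt hp.2)]
  exact hG.eqn p hp

lemma fderiv_fderiv_time (hG : IsBurgersSol R G) (hp : p ∈ burgersDom R) :
    fderiv ℝ (fderiv ℝ G) p (0, 0, 1) (1, 0, 0) =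
      fderiv ℝ G p (1, 0, 0) * fderiv ℝ (fderiv ℝ G) p (1, 0, 0) (1, 0, 0) := by
  have hsymm : fderiv ℝ (fderiv ℝ G) p (0, 0, 1) (1, 0, 0) =
      fderiv ℝ (fderiv ℝ G) p (1, 0, 0) (0, 0, 1) :=
    (hG.contDiffAt hp.2).isSymmSndFDerivAt (by simp) _ _
  have hline : HasDerivAt (fun s : ℝ => (s, p.2.1, p.2.2)) (1, 0, 0) p.1 :=
    (hasDerivAt_id _).prodMk (hasDerivAt_const _ (p.2.1, p.2.2))
  have hderiv (w : ℝ × ℝ × ℝ) := hasDerivAt_fderiv_comp_apply (hG.contDiffAt hp.2) hline w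
  have htime := hderiv (0, 0, 1)
  have heqn : (fun s : ℝ => fderiv ℝ G (s, p.2.1, p.2.2) (0, 0, 1)) =
      fun s : ℝ => 1 / 2 * fderiv ℝ G (s, p.2.1, p.2.2) (1, 0, 0) ^ 2 :=
    funext fun s => hG.fderiv_time (p := (s, p.2.1, p.2.2)) hp
  rw [heqn] at htime
  rw [hsymm, htime.unique (((hderiv (1, 0, 0)).pow 2).const_mul (1 / 2))]
  simp only [Nat.cast_ofNat, Nat.add_one_sub_one, pow_one]
  ring

lemma fderiv_charLine (hG : IsBurgersSol R G) (hτ : τ ∈ Ico 0 (mOf R)⁻¹) (σ α : ℝ) :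
    fderiv ℝ G (charMap R τ α σ, α, τ) (1, 0, 0) = d1R R σ α := by
  set γ : ℝ → ℝ × ℝ × ℝ := fun t => (charMap R t α σ, α, t)
  have hγ := hasDerivAt_charLine R σ α
  have hmem : ∀ t ∈ Icc 0 τ, γ t ∈ burgersDom R := fun t ht => ⟨ht.1, ht.2.trans_lt hτ.2⟩
  have hcont : ContinuousOn
      (fun t => fderiv ℝ (fderiv ℝ G) (γ t) (1, 0, 0) (1, 0, 0)) (Icc 0 τ) := fun t ht => by
    have h2 : ContDiffAt ℝ 0 (fderiv ℝ (fderiv ℝ G)) (γ t) :=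
      ((hG.contDiffAt (hmem t ht).2).fderiv_right (m := 1) (by norm_num)).fderiv_right (by norm_num)
    have h2γ : ContinuousAt (fun t => fderiv ℝ (fderiv ℝ G) (γ t)) t :=
      h2.continuousAt.comp (f := γ) (hγ t).continuousAt
    exact ((h2γ.clm_apply continuousAt_const).clm_apply continuousAt_const).continuousWithinAt
  have hode : ∀ t ∈ Icc 0 τ, HasDerivAt (fun t => fderiv ℝ G (γ t) (1, 0, 0) - d1R R σ α)
      (fderiv ℝ (fderiv ℝ G) (γ t) (1, 0, 0) (1, 0, 0) *
        (fderiv ℝ G (γ t) (1, 0, 0) - d1R R σ α)) t := fun t ht => by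
    refine ((hasDerivAt_fderiv_comp_apply (hG.contDiffAt (hmem t ht).2) (hγ t)
      (1, 0, 0)).sub_const _).congr_deriv ?_
    rw [show ((-d1R R σ α, 0, 1) : ℝ × ℝ × ℝ) = (-d1R R σ α) • (1, 0, 0) + (0, 0, 1) by simp]
    simp only [map_add, map_smul, add_apply, smul_apply, smul_eq_mul]
    rw [hG.fderiv_fderiv_time (hmem t ht)]
    ring
  have hinit : fderiv ℝ G (γ 0) (1, 0, 0) - d1R R σ α = 0 := by
    rw [← pd_zero_eq_fderiv (hG.differentiableAt (hmem 0 ⟨le_rfl, hτ.1⟩).2)]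
    simp [γ, pd, charMap, d1R, hG.init]
  exact sub_eq_zero.1 (eq_zero_of_hasDerivAt_mul_self hcont hode hinit τ ⟨hτ.1, le_rfl⟩)

lemma pd_zero_charMap (hG : IsBurgersSol R G) (hτ : τ ∈ Ico 0 (mOf R)⁻¹) (σ α : ℝ) :
    pd 0 G (charMap R τ α σ, α, τ) = d1R R σ α := by
  rw [pd_zero_eq_fderiv (hG.differentiableAt hτ.2), hG.fderiv_charLine hτ]

lemma apply_charMap (hG : IsBurgersSol R G) (hτ : τ ∈ Ico 0 (mOf R)⁻¹) (σ α : ℝ) :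
    G (charMap R τ α σ, α, τ) = charValue R τ α σ := by
  have hmem : ∀ t ∈ Icc 0 τ, t ∈ Ico 0 (mOf R)⁻¹ := fun t ht => ⟨ht.1, ht.2.trans_lt hτ.2⟩
  have hG_deriv : ∀ t ∈ Icc 0 τ,
      HasDerivAt (fun t => G (charMap R t α σ, α, t)) (-(d1R R σ α ^ 2 / 2)) t := fun t ht => by
    refine ((hG.differentiableAt (hmem t ht).2).hasFDerivAt.comp_hasDerivAt t
      (hasDerivAt_charLine R σ α t)).congr_deriv ?_
    rw [show ((-d1R R σ α, 0, 1) : ℝ × ℝ × ℝ) = (-d1R R σ α) • (1, 0, 0) + (0, 0, 1) by simp,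
      map_add, map_smul, hG.fderiv_time (hmem t ht), hG.fderiv_charLine (hmem t ht), smul_eq_mul]
    ring
  have hvalue_deriv : ∀ t, HasDerivAt (fun t => charValue R t α σ) (-(d1R R σ α ^ 2 / 2)) t :=
    fun t => (((hasDerivAt_id t).div_const 2).mul_const (d1R R σ α ^ 2)).const_sub (R σ α)
      |>.congr_deriv (by ring)
  refine eq_of_has_deriv_right_eq (a := 0) (b := τ)
    (fun t ht => (hG_deriv t (Ico_subset_Icc_self ht)).hasDerivWithinAt)
    (fun t _ => (hvalue_deriv t).hasDerivWithinAt)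
    (fun t ht => (hG_deriv t ht).continuousAt.continuousWithinAt)
    (fun t _ => (hvalue_deriv t).continuousAt.continuousWithinAt) ?_ τ ⟨hτ.1, le_rfl⟩
  simp [charMap, charValue, hG.init]

lemma eqOn {G₁ G₂ : ℝ × ℝ × ℝ → ℝ} (h₁ : IsBurgersSol R G₁) (h₂ : IsBurgersSol R G₂)
    (hsurj : ∀ τ ∈ Ico 0 (mOf R)⁻¹, ∀ α, Function.Surjective (charMap R τ α)) :
    EqOn G₁ G₂ (burgersDom R) := by
  rintro ⟨x, α, τ⟩ hτ
  obtain ⟨σ, rfl⟩ := hsurj τ hτ α x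
  rw [h₁.apply_charMap hτ, h₂.apply_charMap hτ]

end IsBurgersSol

theorem burgers_profile_general (R : ℝ → ℝ → ℝ)
    (hsm : ContDiff ℝ (⊤ : ℕ∞) (fun q : ℝ × ℝ => R q.1 q.2))
    (hbelow : BddBelow (Set.range fun p : ℝ × ℝ => d2R R p.1 p.2))
    (hbdd : BddAbove (Set.range fun p : ℝ × ℝ => d2R R p.1 p.2))
    (hm : 0 < mOf R) :
    (∃ G : ℝ × ℝ × ℝ → ℝ, IsBurgersSol R G ∧
      ContDiffOn ℝ (⊤ : ℕ∞) G {p : ℝ × ℝ × ℝ | p.2.2 < (mOf R)⁻¹} ∧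
      ∀ P : ℝ, (∀ σ α : ℝ, R σ (α + P) = R σ α) →
        ∀ σ α τ : ℝ, G (σ, α + P, τ) = G (σ, α, τ)) ∧
    (∀ G₁ G₂ : ℝ × ℝ × ℝ → ℝ, IsBurgersSol R G₁ → IsBurgersSol R G₂ →
      Set.EqOn G₁ G₂ (burgersDom R)) ∧
    (∀ τ ∈ Set.Ico (0 : ℝ) (mOf R)⁻¹, ∀ α : ℝ,
      ∃ e : ℝ ≃ ℝ,
        (∀ σ : ℝ, e σ = σ - τ * deriv (fun σ' => R σ' α) σ) ∧
        ContDiff ℝ (⊤ : ℕ∞) (e : ℝ → ℝ) ∧ ContDiff ℝ (⊤ : ℕ∞) (e.symm : ℝ → ℝ)) ∧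
    (∀ G : ℝ × ℝ × ℝ → ℝ, IsBurgersSol R G →
      ∀ σ α : ℝ, ∀ τ ∈ Set.Ico (0 : ℝ) (mOf R)⁻¹,
        pd 0 G (σ - τ * deriv (fun σ' => R σ' α) σ, α, τ) =
          deriv (fun σ' => R σ' α) σ) := by
  have hR2 : ContDiff ℝ 2 fun q : ℝ × ℝ => R q.1 q.2 := contDiff_infty.1 hsm 2
  obtain ⟨ε, hε, hreg⟩ := exists_forall_mem_Ioo_isRegularTime hbelow hbdd hm
  have hsub : Ico 0 (mOf R)⁻¹ ⊆ Ioo (-ε) (mOf R)⁻¹ :=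
    Ico_subset_Ioo_left (neg_lt_zero.2 hε)
  refine ⟨exists_smooth_isBurgersSol hsm hε hm hreg, fun G₁ G₂ h₁ h₂ => h₁.eqOn h₂ ?_, ?_,
    fun G hG σ α τ hτ => hG.pd_zero_charMap hτ σ α⟩
  · exact fun τ hτ α => (bijective_charMap hR2 (hreg τ (hsub hτ)) α).surjective
  · exact fun τ hτ => exists_charMap_equiv hsm ((isOpen_Ioo.eventually_mem (hsub hτ)).mono hreg)

/-- **Solution of the profile (Burgers-type) equation (2.1.1)**: there is exactly one `C²`
solution `G` of `∂_τ G = ½(∂_σ G)²` on `ℝ × ℝ × [0, 1/m)` with `G(·,·,0) = R`; it is `C^∞`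
and `2π`-periodic in `α`; the characteristic map `σ ↦ σ − τ ∂_σR(σ,α)` is a `C^∞`
diffeomorphism of `ℝ` for each `τ ∈ [0, 1/m)` and `α`; and
`∂_σG(σ − τ ∂_σR(σ,α), α, τ) = ∂_σR(σ,α)`. -/
theorem burgers_profile (R : ℝ → ℝ → ℝ)
    (hsm : ContDiff ℝ (⊤ : ℕ∞) (fun q : ℝ × ℝ => R q.1 q.2))
    (hper : ∀ σ α : ℝ, R σ (α + 2 * Real.pi) = R σ α)
    (hbd : AllDerivBounded R)
    (hbdd : BddAbove (Set.range fun p : ℝ × ℝ => d2R R p.1 p.2))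
    (hm : 0 < mOf R) :
    (∃ G : ℝ × ℝ × ℝ → ℝ, IsBurgersSol R G ∧
      ContDiffOn ℝ (⊤ : ℕ∞) G {p : ℝ × ℝ × ℝ | p.2.2 < (mOf R)⁻¹} ∧
      ∀ σ α τ : ℝ, G (σ, α + 2 * Real.pi, τ) = G (σ, α, τ)) ∧
    (∀ G₁ G₂ : ℝ × ℝ × ℝ → ℝ, IsBurgersSol R G₁ → IsBurgersSol R G₂ →
      Set.EqOn G₁ G₂ (burgersDom R)) ∧
    (∀ τ ∈ Set.Ico (0 : ℝ) (mOf R)⁻¹, ∀ α : ℝ,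
      ∃ e : ℝ ≃ ℝ,
        (∀ σ : ℝ, e σ = σ - τ * deriv (fun σ' => R σ' α) σ) ∧
        ContDiff ℝ (⊤ : ℕ∞) (e : ℝ → ℝ) ∧ ContDiff ℝ (⊤ : ℕ∞) (e.symm : ℝ → ℝ)) ∧
    (∀ G : ℝ × ℝ × ℝ → ℝ, IsBurgersSol R G →
      ∀ σ α : ℝ, ∀ τ ∈ Set.Ico (0 : ℝ) (mOf R)⁻¹,
        pd 0 G (σ - τ * deriv (fun σ' => R σ' α) σ, α, τ) =
          deriv (fun σ' => R σ' α) σ) := by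
  obtain ⟨⟨G, hG, hG_smooth, hG_per⟩, h⟩ := burgers_profile_general R hsm
    (bddBelow_range_d2R (contDiff_infty.1 hsm 2) hbd) hbdd hm
  exact ⟨⟨G, hG, hG_smooth, hG_per _ hper⟩, h⟩

end
end

section
/- For every integer s̄ ≥ 0 there exists a Schwartz function ψ on ℝ³ with support contained in {(x,y,t) : t ≥ 0, x ≤ 0}, with ∫_{ℝ³} ψ = 1 and ∫_{ℝ³} z^β ψ(z) dz = 0 for all multi-indices β with 1 ≤ |β| ≤ s̄, such that the operators S_θ u = ψ_θ * u, where ψ_θ(z) = θ³ ψ(θz) and θ ≥ 1, satisfy: for all integers 0 ≤ s, s′ ≤ s̄ there is a constant C such that for all u with ‖u‖_{H^{s′}} < ∞ and all θ ≥ 1: (i) ‖S_θ u‖_{H^s} ≤ C‖u‖_{H^{s′}} if s ≤ s′; (ii) ‖S_θ u‖_{H^s} ≤ C·θ^{s−s′}‖u‖_{H^{s′}} if s ≥ s′; (iii) ‖u − S_θ u‖_{H^s} ≤ C·θ^{s−s′}‖u‖_{H^{s′}} if s ≤ s′; (iv) ‖(d/dθ) S_θ u‖_{H^s} ≤ C·θ^{s−s′−1}‖u‖_{H^{s′}}.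 -/
open MeasureTheory

noncomputable section

/-- Squared Sobolev `H^s` norm on `ℝ³` (equivalently summing over multi-indices of
order `≤ s`, here via the iterated total derivatives). -/
def SobSq (s : ℕ) (u : ℝ × ℝ × ℝ → ℝ) : ℝ :=
  ∑ i ∈ Finset.range (s + 1), ∫ z : ℝ × ℝ × ℝ, ‖iteratedFDeriv ℝ i u z‖ ^ 2

/-- The smoothing operator `S_θ u = ψ_θ * u`, where `ψ_θ(z) = θ³ ψ(θ z)`. -/
def smoothOp (ψ : ℝ × ℝ × ℝ → ℝ) (θ : ℝ) (u : ℝ × ℝ × ℝ → ℝ) (z : ℝ × ℝ × ℝ) : ℝ :=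
  ∫ w : ℝ × ℝ × ℝ, θ ^ 3 * ψ (θ • w) * u (z - w)

/-!
Minkowski's integral inequality moves every Sobolev estimate onto the kernel. If at least as many
derivatives are wanted as `u` has, the extra ones fall on `ψ_θ` and each costs a factor `θ` through
the scaling of `‖D^m ψ_θ‖_{L¹}`. If fewer are wanted, Taylor's formula for `u(z - w)` to order `k`
is integrated against `ψ_θ(w)`: the vanishing moments leave only the remainder, which gains
`∫ |ψ_θ(w)| |w|^k dw = O(θ^{-k})`. The `θ`-derivative of `ψ_θ` is `θ⁻¹ χ_θ` for
`χ = d ψ + w · ∇ψ`; differentiating `∫ P ψ_θ = θ^{-j} ∫ P ψ` at `θ = 1` for `P` homogeneous of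
degree `j` gives `∫ P χ = -j ∫ P ψ`, so the moments of `χ` up to the given order, including order
zero, vanish and both bounds apply to `χ_θ * u`.

The kernel is `ψ = ∑ c_j φ_{1/x_j}` for a bump function `φ` supported in the cone: dilation
multiplies the moments of order `k` by `x_j^k`, so vanishing moments amount to
`∑ c_j x_j^k = 0^k`, which is solved by the values at `0` of the Lagrange basis polynomials.
-/

set_option maxSynthPendingDepth 3

open ContinuousLinearMap (lsmul)
open Filter Finset Function Module Set Topology
open scoped Convolution ContDiff ENNReal NNReal Nat SchwartzMap

lemma rpow_lintegral_mul_le {W : Type*} [MeasurableSpace W] {ν : Measure W} {κ b : W → ℝ≥0∞}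
    {p : ℝ} (hp : 1 ≤ p) (hκ : Measurable κ) (hb : Measurable b) :
    (∫⁻ w, κ w * b w ∂ν) ^ p ≤ (∫⁻ w, κ w ∂ν) ^ (p - 1) * ∫⁻ w, κ w * b w ^ p ∂ν := by
  have hp0 : 0 < p := by linarith
  have hq : 0 ≤ 1 - 1 / p := sub_nonneg.2 ((div_le_one hp0).2 hp)
  have split_weight (w : W) : κ w ^ (1 - 1 / p) * (κ w * b w ^ p) ^ (1 / p) = κ w * b w := by
    rw [ENNReal.mul_rpow_of_nonneg _ _ (by positivity), ← ENNReal.rpow_mul,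
      mul_one_div_cancel hp0.ne', ENNReal.rpow_one, ← mul_assoc,
      ← ENNReal.rpow_add_of_nonneg _ _ hq (by positivity), sub_add_cancel, ENNReal.rpow_one]
  have holder := ENNReal.lintegral_mul_norm_pow_le (μ := ν) hκ.aemeasurable
    (hκ.mul (hb.pow_const p)).aemeasurable hq (by positivity : 0 ≤ 1 / p) (by ring)
  simp only [Pi.mul_apply, split_weight] at holder
  calc (∫⁻ w, κ w * b w ∂ν) ^ p
      ≤ ((∫⁻ w, κ w ∂ν) ^ (1 - 1 / p) * (∫⁻ w, κ w * b w ^ p ∂ν) ^ (1 / p)) ^ p := by gcongr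
    _ = (∫⁻ w, κ w ∂ν) ^ (p - 1) * ∫⁻ w, κ w * b w ^ p ∂ν := by
      rw [ENNReal.mul_rpow_of_nonneg _ _ hp0.le, ← ENNReal.rpow_mul, ← ENNReal.rpow_mul,
        one_div_mul_cancel hp0.ne', ENNReal.rpow_one, sub_mul, one_div_mul_cancel hp0.ne', one_mul]

section Minkowski

variable {G W : Type*} [AddGroup G] [MeasurableSpace G] [MeasurableSub₂ G] [MeasurableAdd G]
  [MeasurableSpace W] {μ : Measure G} [SFinite μ] [μ.IsAddRightInvariant]
  {ν : Measure W} {κ : W → ℝ≥0∞} {h : W → G} {a : G → ℝ≥0∞}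

lemma lintegral_lintegral_mul_comp_sub [SFinite ν] (hκ : Measurable κ) (hh : Measurable h)
    (ha : Measurable a) :
    ∫⁻ z, ∫⁻ w, κ w * a (z - h w) ∂ν ∂μ = (∫⁻ w, κ w ∂ν) * ∫⁻ z, a z ∂μ := by
  rw [lintegral_lintegral_swap (by fun_prop), ← lintegral_mul_const _ hκ]
  refine lintegral_congr fun w => ?_
  rw [lintegral_const_mul _ (by fun_prop), lintegral_sub_right_eq_self a (h w)]

theorem eLpNorm_lintegral_mul_comp_sub_le [SFinite ν] {p : ℝ≥0∞} (hp : 1 ≤ p) (hκ : Measurable κ)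
    (hh : Measurable h) (ha : Measurable a) :
    eLpNorm (fun z => ∫⁻ w, κ w * a (z - h w) ∂ν) p μ ≤ (∫⁻ w, κ w ∂ν) * eLpNorm a p μ := by
  rcases eq_or_ne p ∞ with rfl | hp_top
  · simp only [eLpNorm_exponent_top]
    have translate_bound (w : W) : ∀ᵐ z ∂μ, a (z - h w) ≤ eLpNormEssSup a μ :=
      (measurePreserving_sub_right μ (h w)).quasiMeasurePreserving.ae
        (enorm_ae_le_eLpNormEssSup a μ)
    have ae_bound : ∀ᵐ z ∂μ, ∀ᵐ w ∂ν, a (z - h w) ≤ eLpNormEssSup a μ :=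
      (Measure.ae_ae_comm (p := fun w z => a (z - h w) ≤ eLpNormEssSup a μ)
        (measurableSet_le (by fun_prop) measurable_const)).1 (ae_of_all ν translate_bound)
    refine essSup_le_of_ae_le _ ?_
    filter_upwards [ae_bound] with z hz
    rw [enorm_eq_self, ← lintegral_mul_const _ hκ]
    exact lintegral_mono_ae (hz.mono fun w hw => by gcongr)
  · have hp_pos : 0 < p.toReal := ENNReal.toReal_pos (by positivity) hp_top
    have hp_one : 1 ≤ p.toReal := by simpa using ENNReal.toReal_mono hp_top hp
    simp only [eLpNorm_eq_lintegral_rpow_enorm_toReal (by positivity : p ≠ 0) hp_top,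
      enorm_eq_self, one_div]
    rw [ENNReal.rpow_inv_le_iff hp_pos, ENNReal.mul_rpow_of_nonneg _ _ hp_pos.le,
      ← ENNReal.rpow_mul, inv_mul_cancel₀ hp_pos.ne', ENNReal.rpow_one]
    calc ∫⁻ z, (∫⁻ w, κ w * a (z - h w) ∂ν) ^ p.toReal ∂μ
        ≤ ∫⁻ z, (∫⁻ w, κ w ∂ν) ^ (p.toReal - 1) * ∫⁻ w, κ w * a (z - h w) ^ p.toReal ∂ν ∂μ :=
          lintegral_mono fun z => rpow_lintegral_mul_le hp_one hκ (by fun_prop)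
      _ = (∫⁻ w, κ w ∂ν) ^ (p.toReal - 1) * ((∫⁻ w, κ w ∂ν) * ∫⁻ z, a z ^ p.toReal ∂μ) := by
          rw [lintegral_const_mul _ (by fun_prop),
            lintegral_lintegral_mul_comp_sub (a := fun z => a z ^ p.toReal) hκ hh (by fun_prop)]
      _ = (∫⁻ w, κ w ∂ν) ^ p.toReal * ∫⁻ z, a z ^ p.toReal ∂μ := by
          nth_rw 2 [← ENNReal.rpow_one (∫⁻ w, κ w ∂ν)]
          rw [← mul_assoc, ← ENNReal.rpow_add_of_nonneg _ _ (by linarith) zero_le_one,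
            sub_add_cancel]

end Minkowski

section IteratedDerivative

variable {E F : Type*} [NormedAddCommGroup E] [NormedSpace ℝ E] [NormedAddCommGroup F]
  [NormedSpace ℝ F]

lemma norm_iteratedFDeriv_iteratedFDeriv (m n : ℕ) (v : E → F) (z : E) :
    ‖iteratedFDeriv ℝ m (iteratedFDeriv ℝ n v) z‖ = ‖iteratedFDeriv ℝ (m + n) v z‖ := by
  induction n generalizing m with
  | zero => rw [iteratedFDeriv_zero_eq_comp, LinearIsometryEquiv.norm_iteratedFDeriv_comp_left,
      add_zero]
  | succ n ih =>
    rw [iteratedFDeriv_succ_eq_comp_left, LinearIsometryEquiv.norm_iteratedFDeriv_comp_left,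
      norm_iteratedFDeriv_fderiv, ih, add_right_comm, add_assoc]

lemma enorm_iteratedFDeriv_zero (v : E → F) (z : E) : ‖iteratedFDeriv ℝ 0 v z‖ₑ = ‖v z‖ₑ := by
  rw [← ofReal_norm, norm_iteratedFDeriv_zero, ofReal_norm]

lemma eLpNorm_iteratedFDeriv_zero [MeasurableSpace E] (v : E → F) (p : ℝ≥0∞) (μ : Measure E) :
    eLpNorm (iteratedFDeriv ℝ 0 v) p μ = eLpNorm v p μ :=
  eLpNorm_congr_enorm_ae (ae_of_all μ (enorm_iteratedFDeriv_zero v))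

lemma eLpNorm_iteratedFDeriv_iteratedFDeriv [MeasurableSpace E] (m n : ℕ) (v : E → F) (p : ℝ≥0∞)
    (μ : Measure E) :
    eLpNorm (iteratedFDeriv ℝ m (iteratedFDeriv ℝ n v)) p μ =
      eLpNorm (iteratedFDeriv ℝ (m + n) v) p μ :=
  eLpNorm_congr_norm_ae (ae_of_all μ (norm_iteratedFDeriv_iteratedFDeriv m n v))

end IteratedDerivative

section Convolution

variable {E F : Type*} [NormedAddCommGroup E] [MeasurableSpace E] {μ : Measure E}
  [NormedAddCommGroup F] [NormedSpace ℝ F] {f : E → ℝ} {v : E → F}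

lemma linearIsometryEquiv_comp_convolution {F' : Type*} [NormedAddCommGroup F'] [NormedSpace ℝ F']
    (L : F ≃ₗᵢ[ℝ] F') (f : E → ℝ) (v : E → F) :
    L ∘ (f ⋆[lsmul ℝ ℝ, μ] v) = f ⋆[lsmul ℝ ℝ, μ] (L ∘ v) := by
  ext z
  simp only [Function.comp_apply, convolution_def, ContinuousLinearMap.lsmul_apply, ← L.map_smul]
  exact (L.toContinuousLinearEquiv.integral_comp_comm _).symm

variable [BorelSpace E] [IsFiniteMeasureOnCompacts μ]

lemma integrable_smul_comp_sub (hf : Continuous f) (hfs : HasCompactSupport f) (hv : Continuous v)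
    (z : E) :
    Integrable (fun w => f w • v (z - w)) μ :=
  (hf.smul (hv.comp (continuous_const.sub continuous_id))).integrable_of_hasCompactSupport
    hfs.smul_right

variable [NormedSpace ℝ E] [FiniteDimensional ℝ E]

lemma hasFDerivAt_convolution_of_contDiff_right (hf : Continuous f) (hfs : HasCompactSupport f)
    (hv : ContDiff ℝ 1 v) (z : E) :
    HasFDerivAt (f ⋆[lsmul ℝ ℝ, μ] v) ((f ⋆[lsmul ℝ ℝ, μ] fderiv ℝ v) z) z := by
  have hv' : Continuous (fderiv ℝ v) := hv.continuous_fderiv one_ne_zero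
  obtain ⟨C, hC⟩ := ((isCompact_closedBall z 1).prod hfs).exists_bound_of_continuousOn
    (f := fun q : E × E => fderiv ℝ v (q.1 - q.2)) (by fun_prop)
  have fderiv_bound (w x : E) (hx : x ∈ Metric.closedBall z 1) :
      ‖f w • fderiv ℝ v (x - w)‖ ≤ ‖f w‖ * C := by
    by_cases hw : w ∈ tsupport f
    · exact (norm_smul_le _ _).trans (by gcongr; exact hC (x, w) ⟨hx, hw⟩)
    · simp [image_eq_zero_of_notMem_tsupport hw]
  refine hasFDerivAt_integral_of_dominated_of_fderiv_le (Metric.closedBall_mem_nhds z one_pos)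
    (.of_forall fun x => (integrable_smul_comp_sub hf hfs hv.continuous x).aestronglyMeasurable)
    (integrable_smul_comp_sub hf hfs hv.continuous z)
    (integrable_smul_comp_sub hf hfs hv' z).aestronglyMeasurable
    (ae_of_all _ fderiv_bound)
    ((hf.norm.integrable_of_hasCompactSupport hfs.norm).mul_const C)
    (ae_of_all _ fun w x _ => ?_)
  exact ((hasFDerivAt_comp_sub w).2
    (hv.differentiable one_ne_zero _).hasFDerivAt).const_smul (f w)

lemma iteratedFDeriv_convolution_right (hf : Continuous f) (hfs : HasCompactSupport f) {i : ℕ}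
    (hv : ContDiff ℝ i v) :
    iteratedFDeriv ℝ i (f ⋆[lsmul ℝ ℝ, μ] v) = f ⋆[lsmul ℝ ℝ, μ] iteratedFDeriv ℝ i v := by
  induction i with
  | zero => simp only [iteratedFDeriv_zero_eq_comp, linearIsometryEquiv_comp_convolution]
  | succ i ih =>
    have hi : ContDiff ℝ 1 (iteratedFDeriv ℝ i v) :=
      hv.iteratedFDeriv_right (by rw [add_comm]; norm_cast)
    have fderiv_eq : fderiv ℝ (f ⋆[lsmul ℝ ℝ, μ] iteratedFDeriv ℝ i v) =
        f ⋆[lsmul ℝ ℝ, μ] fderiv ℝ (iteratedFDeriv ℝ i v) :=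
      funext fun z => (hasFDerivAt_convolution_of_contDiff_right hf hfs hi z).fderiv
    rw [iteratedFDeriv_succ_eq_comp_left, iteratedFDeriv_succ_eq_comp_left,
      ih (hv.of_le (by norm_cast; omega)), fderiv_eq, linearIsometryEquiv_comp_convolution]

variable [μ.IsAddLeftInvariant] [μ.IsNegInvariant]

lemma contDiff_convolution_of_contDiff_right (hf : Continuous f) (hfs : HasCompactSupport f)
    {i : ℕ} (hv : ContDiff ℝ i v) : ContDiff ℝ i (f ⋆[lsmul ℝ ℝ, μ] v) := by
  refine contDiff_nat_iff_continuous_differentiable.2 ⟨fun j hj => ?_, fun j hj => ?_⟩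
  · have hvj : ContDiff ℝ j v := hv.of_le (mod_cast hj)
    rw [iteratedFDeriv_convolution_right hf hfs hvj]
    exact hfs.continuous_convolution_left _ hf
      (hvj.continuous_iteratedFDeriv le_rfl).locallyIntegrable
  · rw [iteratedFDeriv_convolution_right hf hfs (hv.of_le (mod_cast hj.le))]
    have hj1 : ContDiff ℝ 1 (iteratedFDeriv ℝ j v) :=
      hv.iteratedFDeriv_right (by rw [add_comm]; exact_mod_cast Nat.succ_le_of_lt hj)
    exact fun z => (hasFDerivAt_convolution_of_contDiff_right hf hfs hj1 z).differentiableAt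

lemma iteratedFDeriv_convolution_left_apply {m : ℕ} (hf : ContDiff ℝ m f)
    (hfs : HasCompactSupport f) (hv : Continuous v) (z : E) (e : Fin m → E) :
    iteratedFDeriv ℝ m (f ⋆[lsmul ℝ ℝ, μ] v) z e =
      ((fun w => iteratedFDeriv ℝ m f w e) ⋆[lsmul ℝ ℝ, μ] v) z := by
  induction m generalizing f with
  | zero => simp only [iteratedFDeriv_zero_apply]
  | succ m ih =>
    have hf1 : ContDiff ℝ 1 f := hf.of_le (by norm_cast; omega)
    have hf' : ContDiff ℝ m (fderiv ℝ f) := hf.fderiv_right (by norm_cast)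
    have hconv : ContDiff ℝ m (fderiv ℝ (f ⋆[lsmul ℝ ℝ, μ] v)) :=
      (hfs.contDiff_convolution_left (n := (m + 1 : ℕ)) (lsmul ℝ ℝ) hf
        hv.locallyIntegrable).fderiv_right (by norm_cast)
    have fderiv_apply (y : E) : fderiv ℝ (f ⋆[lsmul ℝ ℝ, μ] v) y (e (Fin.last m)) =
        ((fun w => fderiv ℝ f w (e (Fin.last m))) ⋆[lsmul ℝ ℝ, μ] v) y := by
      rw [(hfs.hasFDerivAt_convolution_left (lsmul ℝ ℝ) hf1 hv.locallyIntegrable y).fderiv,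
        convolution_def, convolution_def, ContinuousLinearMap.integral_apply]
      · rfl
      · exact (hfs.fderiv ℝ).convolutionExists_left _ (hf1.continuous_fderiv one_ne_zero)
          hv.locallyIntegrable y
    rw [iteratedFDeriv_succ_apply_right, ← iteratedFDeriv_clm_apply_const_apply hconv le_rfl]
    simp only [fderiv_apply, iteratedFDeriv_succ_apply_right]
    rw [ih (hf'.clm_apply contDiff_const) (hfs.fderiv_apply ℝ _)]
    simp only [iteratedFDeriv_clm_apply_const_apply hf' le_rfl]

lemma enorm_iteratedFDeriv_convolution_le {m : ℕ} (hf : ContDiff ℝ m f)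
    (hfs : HasCompactSupport f) (hv : Continuous v) (z : E) :
    ‖iteratedFDeriv ℝ m (f ⋆[lsmul ℝ ℝ, μ] v) z‖ₑ ≤
      ∫⁻ w, ‖iteratedFDeriv ℝ m f w‖ₑ * ‖v (z - w)‖ₑ ∂μ := by
  have hint : Integrable (fun w => ‖iteratedFDeriv ℝ m f w‖ * ‖v (z - w)‖) μ :=
    integrable_smul_comp_sub (hf.continuous_iteratedFDeriv le_rfl).norm
      (hfs.iteratedFDeriv m).norm hv.norm z
  have norm_le : ‖iteratedFDeriv ℝ m (f ⋆[lsmul ℝ ℝ, μ] v) z‖ ≤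
      ∫ w, ‖iteratedFDeriv ℝ m f w‖ * ‖v (z - w)‖ ∂μ := by
    refine ContinuousMultilinearMap.opNorm_le_bound (by positivity) fun e => ?_
    rw [iteratedFDeriv_convolution_left_apply hf hfs hv, convolution_def, ← integral_mul_const]
    refine norm_integral_le_of_norm_le (hint.mul_const _) (ae_of_all _ fun w => ?_)
    rw [ContinuousLinearMap.lsmul_apply, norm_smul, mul_right_comm]
    gcongr
    exact (iteratedFDeriv ℝ m f w).le_opNorm e
  calc ‖iteratedFDeriv ℝ m (f ⋆[lsmul ℝ ℝ, μ] v) z‖ₑ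
      ≤ ENNReal.ofReal (∫ w, ‖iteratedFDeriv ℝ m f w‖ * ‖v (z - w)‖ ∂μ) := by
        rw [← ofReal_norm]; gcongr
    _ = ∫⁻ w, ‖iteratedFDeriv ℝ m f w‖ₑ * ‖v (z - w)‖ₑ ∂μ := by
        rw [ofReal_integral_eq_lintegral_ofReal hint (ae_of_all _ fun w => by positivity)]
        simp only [ENNReal.ofReal_mul (norm_nonneg _), ofReal_norm]

theorem eLpNorm_iteratedFDeriv_convolution_le [SFinite μ] {p : ℝ≥0∞} (hp : 1 ≤ p) {m i : ℕ}
    (hf : ContDiff ℝ m f) (hfs : HasCompactSupport f) (hv : ContDiff ℝ i v) :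
    eLpNorm (iteratedFDeriv ℝ (m + i) (f ⋆[lsmul ℝ ℝ, μ] v)) p μ ≤
      (∫⁻ w, ‖iteratedFDeriv ℝ m f w‖ₑ ∂μ) * eLpNorm (iteratedFDeriv ℝ i v) p μ := by
  have hi : Continuous (iteratedFDeriv ℝ i v) := hv.continuous_iteratedFDeriv le_rfl
  rw [← eLpNorm_iteratedFDeriv_iteratedFDeriv,
    iteratedFDeriv_convolution_right hf.continuous hfs hv]
  calc eLpNorm (iteratedFDeriv ℝ m (f ⋆[lsmul ℝ ℝ, μ] iteratedFDeriv ℝ i v)) p μ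
      ≤ eLpNorm (fun z => ∫⁻ w, ‖iteratedFDeriv ℝ m f w‖ₑ * ‖iteratedFDeriv ℝ i v (z - w)‖ₑ ∂μ)
          p μ := eLpNorm_mono_enorm (enorm_iteratedFDeriv_convolution_le hf hfs hi)
    _ ≤ _ := by
        rw [← eLpNorm_enorm (iteratedFDeriv ℝ i v)]
        exact eLpNorm_lintegral_mul_comp_sub_le (h := fun w => w)
          (a := fun y => ‖iteratedFDeriv ℝ i v y‖ₑ) hp
          (hf.continuous_iteratedFDeriv le_rfl).enorm.measurable measurable_id hi.enorm.measurable

lemma eLpNorm_convolution_sub_integral_smul_le_of_zero [SFinite μ] {p : ℝ≥0∞} (hp : 1 ≤ p)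
    (hf : Continuous f) (hfs : HasCompactSupport f) (hv : Continuous v) :
    eLpNorm (f ⋆[lsmul ℝ ℝ, μ] v - (∫ w, f w ∂μ) • v) p μ ≤
      2 * (∫⁻ w, ‖f w‖ₑ ∂μ) * eLpNorm v p μ := by
  have hfv : Continuous (f ⋆[lsmul ℝ ℝ, μ] v) :=
    hfs.continuous_convolution_left _ hf hv.locallyIntegrable
  have young : eLpNorm (f ⋆[lsmul ℝ ℝ, μ] v) p μ ≤ (∫⁻ w, ‖f w‖ₑ ∂μ) * eLpNorm v p μ := by
    have h := eLpNorm_iteratedFDeriv_convolution_le (μ := μ) hp (m := 0) (i := 0)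
      (contDiff_zero.2 hf) hfs (contDiff_zero.2 hv)
    rw [← eLpNorm_iteratedFDeriv_zero, ← eLpNorm_iteratedFDeriv_zero v]
    simpa only [enorm_iteratedFDeriv_zero] using h
  calc _ ≤ eLpNorm (f ⋆[lsmul ℝ ℝ, μ] v) p μ + eLpNorm ((∫ w, f w ∂μ) • v) p μ :=
        eLpNorm_sub_le hfv.aestronglyMeasurable (hv.const_smul _).aestronglyMeasurable hp
    _ ≤ (∫⁻ w, ‖f w‖ₑ ∂μ) * eLpNorm v p μ + (∫⁻ w, ‖f w‖ₑ ∂μ) * eLpNorm v p μ := by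
        rw [eLpNorm_const_smul]
        gcongr
        exact enorm_integral_le_lintegral_enorm f
    _ = _ := by ring

end Convolution

section Taylor

variable {E F : Type*} [NormedAddCommGroup E] [NormedSpace ℝ E] [NormedAddCommGroup F]
  [NormedSpace ℝ F] [CompleteSpace F] {v : E → F}

lemma enorm_sub_taylor_le {n : ℕ} (hv : ContDiff ℝ (n + 1) v) (z y : E) :
    ‖v (z + y) - ∑ j ∈ range (n + 1), (j ! : ℝ)⁻¹ • iteratedFDeriv ℝ j v z (fun _ => y)‖ₑ ≤
      ‖y‖ₑ ^ (n + 1) * ∫⁻ t in Icc (0 : ℝ) 1, ‖iteratedFDeriv ℝ (n + 1) v (z + t • y)‖ₑ := by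
  have remainder_le (t : ℝ) (ht : t ∈ Icc (0 : ℝ) 1) :
      ‖(1 - t) ^ n • iteratedFDeriv ℝ (n + 1) v (z + t • y) (fun _ => y)‖ₑ ≤
        ‖y‖ₑ ^ (n + 1) * ‖iteratedFDeriv ℝ (n + 1) v (z + t • y)‖ₑ := by
    have weight_le : ‖(1 - t) ^ n‖ ≤ 1 := by
      rw [norm_pow, Real.norm_of_nonneg (sub_nonneg.2 ht.2)]
      exact pow_le_one₀ (sub_nonneg.2 ht.2) (by linarith [ht.1])
    have apply_le : ‖(1 - t) ^ n • iteratedFDeriv ℝ (n + 1) v (z + t • y) (fun _ => y)‖ ≤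
        ‖y‖ ^ (n + 1) * ‖iteratedFDeriv ℝ (n + 1) v (z + t • y)‖ := by
      rw [norm_smul, mul_comm (‖y‖ ^ _)]
      refine (mul_le_of_le_one_left (norm_nonneg _) weight_le).trans ?_
      simpa using (iteratedFDeriv ℝ (n + 1) v (z + t • y)).le_opNorm fun _ => y
    simpa [← ofReal_norm, ENNReal.ofReal_mul, ENNReal.ofReal_pow] using
      ENNReal.ofReal_le_ofReal apply_le
  have factorial_le : ‖(n ! : ℝ)⁻¹‖ₑ ≤ 1 := by
    rw [← ofReal_norm, ENNReal.ofReal_le_one, norm_inv, Real.norm_natCast]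
    exact inv_le_one_of_one_le₀ (mod_cast n.factorial_pos)
  rw [map_add_eq_sum_add_integral_iteratedFDeriv fun t _ => hv.contDiffAt, add_sub_cancel_left,
    enorm_smul, intervalIntegral.integral_of_le zero_le_one, ← integral_Icc_eq_integral_Ioc]
  calc _ ≤ ‖∫ t in Icc (0 : ℝ) 1,
        (1 - t) ^ n • iteratedFDeriv ℝ (n + 1) v (z + t • y) (fun _ => y)‖ₑ :=
        mul_le_of_le_one_left' factorial_le
    _ ≤ ∫⁻ t in Icc (0 : ℝ) 1,
        ‖y‖ₑ ^ (n + 1) * ‖iteratedFDeriv ℝ (n + 1) v (z + t • y)‖ₑ :=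
      (enorm_integral_le_lintegral_enorm _).trans
        (setLIntegral_mono' measurableSet_Icc remainder_le)
    _ = _ := lintegral_const_mul' _ _ (by finiteness)

end Taylor

section VanishingMoments

variable {E F : Type*} [NormedAddCommGroup E] [NormedSpace ℝ E] [MeasurableSpace E]
  {μ : Measure E} [NormedAddCommGroup F] [NormedSpace ℝ F] {f : E → ℝ} {v : E → F}

/-- The moments of `f` of orders `1, …, N` vanish. A moment of order `j` is the integral of `f`
against a homogeneous polynomial of degree `j`, encoded as the restriction to the diagonal of a
`j`-linear form. -/
def HasVanishingMoments (μ : Measure E) (N : ℕ) (f : E → ℝ) : Prop :=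
  ∀ j, 1 ≤ j → j ≤ N → ∀ M : E [×j]→L[ℝ] ℝ, ∫ w, f w * M (fun _ => w) ∂μ = 0

variable [BorelSpace E] [IsFiniteMeasureOnCompacts μ]

lemma integrable_smul_multilinear (hf : Continuous f) (hfs : HasCompactSupport f) {j : ℕ}
    (M : E [×j]→L[ℝ] F) : Integrable (fun w => f w • M (fun _ => w)) μ :=
  (hf.smul (M.cont.comp (continuous_pi fun _ => continuous_id))).integrable_of_hasCompactSupport
    hfs.smul_right

variable [CompleteSpace F]

lemma HasVanishingMoments.integral_smul_eq_zero {N j : ℕ} (hfN : HasVanishingMoments μ N f)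
    (hf : Continuous f) (hfs : HasCompactSupport f) (hj : 1 ≤ j) (hjN : j ≤ N)
    (M : E [×j]→L[ℝ] F) : ∫ w, f w • M (fun _ => w) ∂μ = 0 := by
  refine SeparatingDual.eq_zero_of_forall_dual_eq_zero (R := ℝ) fun L => ?_
  rw [← L.integral_comp_comm (integrable_smul_multilinear hf hfs M)]
  simpa using hfN j hj hjN (L.compContinuousMultilinearMap M)

lemma convolution_sub_integral_smul_eq {N n : ℕ} (hfN : HasVanishingMoments μ N f) (hn : n ≤ N)
    (hf : Continuous f) (hfs : HasCompactSupport f) (hv : Continuous v) (z : E) :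
    (f ⋆[lsmul ℝ ℝ, μ] v) z - (∫ w, f w ∂μ) • v z = ∫ w, f w • (v (z + -w) -
      ∑ j ∈ range (n + 1), (j ! : ℝ)⁻¹ • iteratedFDeriv ℝ j v z (fun _ => -w)) ∂μ := by
  have neg_pow (j : ℕ) (w : E) : iteratedFDeriv ℝ j v z (fun _ => -w) =
      (-1 : ℝ) ^ j • iteratedFDeriv ℝ j v z (fun _ => w) := by
    simpa using (iteratedFDeriv ℝ j v z).map_smul_univ (fun _ => (-1 : ℝ)) (fun _ => w)
  have term_integrable (j : ℕ) :
      Integrable (fun w => f w • (j ! : ℝ)⁻¹ • iteratedFDeriv ℝ j v z (fun _ => -w)) μ := by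
    simp only [neg_pow, smul_comm (f _)]
    exact ((integrable_smul_multilinear hf hfs _).smul _).smul _
  have term_integral (j : ℕ) (hj : j ∈ range n) :
      ∫ w, f w • ((j + 1) ! : ℝ)⁻¹ • iteratedFDeriv ℝ (j + 1) v z (fun _ => -w) ∂μ = 0 := by
    simp only [neg_pow, smul_comm (f _), integral_smul]
    rw [hfN.integral_smul_eq_zero hf hfs (by omega) (by have := Finset.mem_range.1 hj; omega),
      smul_zero, smul_zero]
  simp only [smul_sub, Finset.smul_sum, ← sub_eq_add_neg]
  rw [integral_sub (integrable_smul_comp_sub hf hfs hv z)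
    (integrable_finsetSum _ fun j _ => term_integrable j),
    integral_finsetSum _ fun j _ => term_integrable j, Finset.sum_range_succ',
    Finset.sum_eq_zero term_integral, zero_add, ← integral_smul_const]
  simp [convolution_def]

variable [FiniteDimensional ℝ E]

lemma enorm_convolution_sub_integral_smul_le {N n : ℕ} (hfN : HasVanishingMoments μ N f)
    (hn : n ≤ N) (hf : Continuous f) (hfs : HasCompactSupport f) (hv : ContDiff ℝ (n + 1) v)
    (z : E) :
    ‖(f ⋆[lsmul ℝ ℝ, μ] v) z - (∫ w, f w ∂μ) • v z‖ₑ ≤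
      ∫⁻ q, ‖f q.1‖ₑ * ‖q.1‖ₑ ^ (n + 1) * ‖iteratedFDeriv ℝ (n + 1) v (z - q.2 • q.1)‖ₑ
        ∂μ.prod (volume.restrict (Icc (0 : ℝ) 1)) := by
  have hD : Continuous (iteratedFDeriv ℝ (n + 1) v) := hv.continuous_iteratedFDeriv (by norm_cast)
  rw [convolution_sub_integral_smul_eq hfN hn hf hfs hv.continuous]
  refine (enorm_integral_le_lintegral_enorm _).trans ?_
  rw [lintegral_prod _ (Measurable.aemeasurable
    (Measurable.fun_mul (by fun_prop) (hD.enorm.measurable.fun_comp (by fun_prop))))]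
  refine lintegral_mono fun w => ?_
  rw [enorm_smul]
  calc _ ≤ ‖f w‖ₑ * (‖-w‖ₑ ^ (n + 1) *
        ∫⁻ t in Icc (0 : ℝ) 1, ‖iteratedFDeriv ℝ (n + 1) v (z + t • -w)‖ₑ) := by
        gcongr; exact enorm_sub_taylor_le hv z (-w)
    _ = _ := by
        simp only [enorm_neg, smul_neg, ← sub_eq_add_neg]
        rw [← mul_assoc, lintegral_const_mul' _ _ (by finiteness)]

variable [SFinite μ] [μ.IsAddLeftInvariant] {p : ℝ≥0∞}

lemma eLpNorm_convolution_sub_integral_smul_le_of_succ {N n : ℕ} (hp : 1 ≤ p)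
    (hfN : HasVanishingMoments μ N f) (hn : n ≤ N) (hf : Continuous f)
    (hfs : HasCompactSupport f) (hv : ContDiff ℝ (n + 1) v) :
    eLpNorm (f ⋆[lsmul ℝ ℝ, μ] v - (∫ w, f w ∂μ) • v) p μ ≤
      (∫⁻ w, ‖f w‖ₑ * ‖w‖ₑ ^ (n + 1) ∂μ) * eLpNorm (iteratedFDeriv ℝ (n + 1) v) p μ := by
  have hD : Continuous (iteratedFDeriv ℝ (n + 1) v) := hv.continuous_iteratedFDeriv (by norm_cast)
  calc _ ≤ eLpNorm (fun z => ∫⁻ q, ‖f q.1‖ₑ * ‖q.1‖ₑ ^ (n + 1) *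
        ‖iteratedFDeriv ℝ (n + 1) v (z - q.2 • q.1)‖ₑ
          ∂μ.prod (volume.restrict (Icc (0 : ℝ) 1))) p μ :=
        eLpNorm_mono_enorm fun z => enorm_convolution_sub_integral_smul_le hfN hn hf hfs hv z
    _ ≤ (∫⁻ q, ‖f q.1‖ₑ * ‖q.1‖ₑ ^ (n + 1) ∂μ.prod (volume.restrict (Icc (0 : ℝ) 1))) *
        eLpNorm (fun y => ‖iteratedFDeriv ℝ (n + 1) v y‖ₑ) p μ :=
        eLpNorm_lintegral_mul_comp_sub_le (κ := fun q : E × ℝ => ‖f q.1‖ₑ * ‖q.1‖ₑ ^ (n + 1))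
          (h := fun q => q.2 • q.1) (a := fun y => ‖iteratedFDeriv ℝ (n + 1) v y‖ₑ) hp
          (by fun_prop) (by fun_prop) hD.enorm.measurable
    _ = _ := by
        rw [eLpNorm_enorm, lintegral_prod _ (by fun_prop)]
        simp

variable [μ.IsNegInvariant]

theorem eLpNorm_convolution_sub_integral_smul_le {N k : ℕ} (hp : 1 ≤ p)
    (hfN : HasVanishingMoments μ N f) (hk : k ≤ N + 1) (hf : Continuous f)
    (hfs : HasCompactSupport f) (hv : ContDiff ℝ k v) :
    eLpNorm (f ⋆[lsmul ℝ ℝ, μ] v - (∫ w, f w ∂μ) • v) p μ ≤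
      2 * (∫⁻ w, ‖f w‖ₑ * ‖w‖ₑ ^ k ∂μ) * eLpNorm (iteratedFDeriv ℝ k v) p μ := by
  cases k with
  | zero =>
    simpa [eLpNorm_iteratedFDeriv_zero] using
      eLpNorm_convolution_sub_integral_smul_le_of_zero hp hf hfs hv.continuous
  | succ n =>
    rw [mul_assoc]
    exact (eLpNorm_convolution_sub_integral_smul_le_of_succ hp hfN (by omega) hf hfs
      (mod_cast hv)).trans (le_mul_of_one_le_left' one_le_two)

theorem eLpNorm_iteratedFDeriv_convolution_sub_le {N k i : ℕ} (hp : 1 ≤ p)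
    (hfN : HasVanishingMoments μ N f) (hk : k ≤ N + 1) (hf : Continuous f)
    (hfs : HasCompactSupport f) (hv : ContDiff ℝ (k + i) v) :
    eLpNorm (iteratedFDeriv ℝ i (f ⋆[lsmul ℝ ℝ, μ] v - (∫ w, f w ∂μ) • v)) p μ ≤
      2 * (∫⁻ w, ‖f w‖ₑ * ‖w‖ₑ ^ k ∂μ) * eLpNorm (iteratedFDeriv ℝ (k + i) v) p μ := by
  have hvi : ContDiff ℝ i v := hv.of_le (by norm_cast; omega)
  have iteratedFDeriv_eq : iteratedFDeriv ℝ i (f ⋆[lsmul ℝ ℝ, μ] v - (∫ w, f w ∂μ) • v) =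
      f ⋆[lsmul ℝ ℝ, μ] iteratedFDeriv ℝ i v - (∫ w, f w ∂μ) • iteratedFDeriv ℝ i v := by
    ext1 z
    have hcv : ContDiff ℝ i ((∫ w, f w ∂μ) • v) := hvi.const_smul _
    rw [iteratedFDeriv_sub_apply (contDiff_convolution_of_contDiff_right hf hfs hvi).contDiffAt
      hcv.contDiffAt, iteratedFDeriv_convolution_right hf hfs hvi,
      iteratedFDeriv_const_smul_apply hvi.contDiffAt]
    rfl
  rw [iteratedFDeriv_eq, ← eLpNorm_iteratedFDeriv_iteratedFDeriv]
  exact eLpNorm_convolution_sub_integral_smul_le hp hfN hk hf hfs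
    (hv.iteratedFDeriv_right (by norm_cast))

end VanishingMoments

section Dilation

variable {E F : Type*} [NormedAddCommGroup E] [NormedSpace ℝ E] [NormedAddCommGroup F]
  [NormedSpace ℝ F] {f : E → ℝ} {θ : ℝ}

/-- The dilated kernel `f_θ(w) = θ^d f(θ w)` on a space of dimension `d`; for `θ > 0` it has the
same integral as `f`. -/
def dilate (θ : ℝ) (f : E → ℝ) (w : E) : ℝ :=
  θ ^ finrank ℝ E * f (θ • w)

lemma contDiff_dilate {n : ℕ∞ω} (hf : ContDiff ℝ n f) (θ : ℝ) : ContDiff ℝ n (dilate θ f) :=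
  contDiff_const.mul (hf.comp (contDiff_const_smul θ))

lemma hasCompactSupport_dilate (hfs : HasCompactSupport f) (hθ : θ ≠ 0) :
    HasCompactSupport (dilate θ f) :=
  (hfs.comp_smul hθ).mul_left

lemma iteratedFDeriv_dilate {m : ℕ} (hf : ContDiff ℝ m f) (θ : ℝ) (w : E) :
    iteratedFDeriv ℝ m (dilate θ f) w =
      θ ^ finrank ℝ E • θ ^ m • iteratedFDeriv ℝ m f (θ • w) := by
  have hfθ : ContDiff ℝ m fun w => f (θ • w) := hf.comp (contDiff_const_smul θ)
  calc _ = θ ^ finrank ℝ E • iteratedFDeriv ℝ m (fun w => f (θ • w)) w :=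
        iteratedFDeriv_const_smul_apply hfθ.contDiffAt
    _ = _ := by rw [iteratedFDeriv_comp_const_smul θ hf]

variable [FiniteDimensional ℝ E] [MeasurableSpace E] [BorelSpace E] {μ : Measure E}
  [μ.IsAddHaarMeasure]

lemma lintegral_pow_finrank_mul_comp_smul (hθ : 0 < θ) (g : E → ℝ≥0∞) :
    ∫⁻ w, ‖θ ^ finrank ℝ E‖ₑ * g (θ • w) ∂μ = ∫⁻ w, g w ∂μ := by
  have hemb : MeasurableEmbedding fun w : E => θ • w :=
    (Homeomorph.smulOfNeZero θ hθ.ne').measurableEmbedding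
  have scale : ‖θ ^ finrank ℝ E‖ₑ * ENNReal.ofReal |(θ ^ finrank ℝ E)⁻¹| = 1 := by
    rw [← Real.enorm_eq_ofReal_abs, ← enorm_mul, mul_inv_cancel₀ (by positivity), enorm_one]
  rw [lintegral_const_mul' _ _ (by finiteness), ← hemb.lintegral_map,
    Measure.map_addHaar_smul μ hθ.ne', lintegral_smul_measure, smul_eq_mul, ← mul_assoc, scale,
    one_mul]

lemma lintegral_enorm_iteratedFDeriv_dilate {m : ℕ} (hf : ContDiff ℝ m f) (hθ : 0 < θ) :
    ∫⁻ w, ‖iteratedFDeriv ℝ m (dilate θ f) w‖ₑ ∂μ =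
      ‖θ‖ₑ ^ m * ∫⁻ w, ‖iteratedFDeriv ℝ m f w‖ₑ ∂μ := by
  simp only [iteratedFDeriv_dilate hf, enorm_smul]
  rw [lintegral_pow_finrank_mul_comp_smul hθ fun w => ‖θ ^ m‖ₑ * ‖iteratedFDeriv ℝ m f w‖ₑ,
    lintegral_const_mul' _ _ (by finiteness), enorm_pow]

lemma lintegral_enorm_dilate_mul_enorm_pow (hθ : 0 < θ) (f : E → ℝ) (k : ℕ) :
    ∫⁻ w, ‖dilate θ f w‖ₑ * ‖w‖ₑ ^ k ∂μ = ‖θ⁻¹‖ₑ ^ k * ∫⁻ w, ‖f w‖ₑ * ‖w‖ₑ ^ k ∂μ := by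
  have norm_eq (w : E) : ‖w‖ₑ = ‖θ⁻¹‖ₑ * ‖θ • w‖ₑ := by
    rw [← enorm_smul, inv_smul_smul₀ hθ.ne']
  have integrand_eq (w : E) : ‖dilate θ f w‖ₑ * ‖w‖ₑ ^ k =
      ‖θ ^ finrank ℝ E‖ₑ * (‖θ⁻¹‖ₑ ^ k * (‖f (θ • w)‖ₑ * ‖θ • w‖ₑ ^ k)) := by
    rw [norm_eq w, dilate, enorm_mul]
    ring
  simp_rw [integrand_eq]
  rw [lintegral_pow_finrank_mul_comp_smul hθ fun w => ‖θ⁻¹‖ₑ ^ k * (‖f w‖ₑ * ‖w‖ₑ ^ k),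
    lintegral_const_mul' _ _ (by finiteness)]

lemma integral_dilate_smul (hθ : 0 < θ) (f : E → ℝ) (g : E → F) :
    ∫ w, dilate θ f w • g w ∂μ = ∫ w, f w • g (θ⁻¹ • w) ∂μ := by
  have change_of_variable : ∫ w, f (θ • w) • g w ∂μ =
      (θ ^ finrank ℝ E)⁻¹ • ∫ w, f w • g (θ⁻¹ • w) ∂μ := by
    simpa only [inv_smul_smul₀ hθ.ne'] using
      Measure.integral_comp_smul_of_nonneg μ (fun w => f w • g (θ⁻¹ • w)) θ (hR := hθ.le)
  simp only [dilate, mul_smul, integral_smul]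
  rw [change_of_variable, smul_inv_smul₀ (by positivity)]

lemma integral_dilate (hθ : 0 < θ) (f : E → ℝ) : ∫ w, dilate θ f w ∂μ = ∫ w, f w ∂μ := by
  simpa using integral_dilate_smul (μ := μ) hθ f fun _ => (1 : ℝ)

lemma integral_dilate_mul_multilinear (hθ : 0 < θ) (f : E → ℝ) {j : ℕ} (M : E [×j]→L[ℝ] ℝ) :
    ∫ w, dilate θ f w * M (fun _ => w) ∂μ = θ⁻¹ ^ j * ∫ w, f w * M (fun _ => w) ∂μ := by
  have homogeneous (w : E) : M (fun _ => θ⁻¹ • w) = θ⁻¹ ^ j * M (fun _ => w) := by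
    simpa using M.map_smul_univ (fun _ => θ⁻¹) (fun _ => w)
  calc ∫ w, dilate θ f w * M (fun _ => w) ∂μ = ∫ w, f w * M (fun _ => θ⁻¹ • w) ∂μ :=
        integral_dilate_smul hθ f fun w => M (fun _ => w)
    _ = ∫ w, θ⁻¹ ^ j * (f w * M (fun _ => w)) ∂μ := by simp only [homogeneous, mul_left_comm]
    _ = θ⁻¹ ^ j * ∫ w, f w * M (fun _ => w) ∂μ := integral_const_mul _ _

lemma HasVanishingMoments.dilate {N : ℕ} (hfN : HasVanishingMoments μ N f) (hθ : 0 < θ) :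
    HasVanishingMoments μ N (dilate θ f) := fun j hj hjN M => by
  rw [integral_dilate_mul_multilinear hθ, hfN j hj hjN M, mul_zero]

end Dilation

section SobolevNorm

variable {E F G : Type*} [NormedAddCommGroup F] [NormedAddCommGroup G]

lemma ofReal_integral_norm_sq [MeasurableSpace E] {μ : Measure E} {g : E → F}
    (hg : Integrable (fun z => ‖g z‖ ^ 2) μ) :
    ENNReal.ofReal (∫ z, ‖g z‖ ^ 2 ∂μ) = eLpNorm g 2 μ ^ 2 := by
  have eLpNorm_sq : eLpNorm g 2 μ ^ 2 = ∫⁻ z, ‖g z‖ₑ ^ 2 ∂μ := by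
    simpa using eLpNorm_nnreal_pow_eq_lintegral (f := g) (μ := μ) (p := 2) two_ne_zero
  rw [ofReal_integral_eq_lintegral_ofReal hg (ae_of_all _ fun _ => by positivity), eLpNorm_sq]
  simp_rw [ENNReal.ofReal_pow (norm_nonneg _), ofReal_norm]

lemma integral_norm_sq_le_of_eLpNorm_le [MeasurableSpace E] {μ : Measure E} {g : E → F}
    {h : E → G} {c : ℝ} (hc : 0 ≤ c) (hg : Integrable (fun z => ‖g z‖ ^ 2) μ)
    (hle : eLpNorm h 2 μ ≤ ENNReal.ofReal c * eLpNorm g 2 μ) :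
    ∫ z, ‖h z‖ ^ 2 ∂μ ≤ c ^ 2 * ∫ z, ‖g z‖ ^ 2 ∂μ := by
  by_cases hh : Integrable (fun z => ‖h z‖ ^ 2) μ
  · rw [← ENNReal.ofReal_le_ofReal_iff (by positivity), ofReal_integral_norm_sq hh,
      ENNReal.ofReal_mul (by positivity), ofReal_integral_norm_sq hg, ENNReal.ofReal_pow hc,
      ← mul_pow]
    gcongr
  · rw [integral_undef hh]
    positivity

variable [NormedAddCommGroup E] [NormedSpace ℝ E] [MeasurableSpace E] [NormedSpace ℝ F]
  [NormedSpace ℝ G] {μ : Measure E} {s s' : ℕ}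

/-- The square of the Sobolev norm `‖u‖_{H^s}`, with the partial derivatives of order `i` replaced
by the operator norm of the total derivative of order `i`. -/
def sobolevSq (μ : Measure E) (s : ℕ) (u : E → F) : ℝ :=
  ∑ i ∈ range (s + 1), ∫ z, ‖iteratedFDeriv ℝ i u z‖ ^ 2 ∂μ

lemma integral_norm_iteratedFDeriv_sq_le_sobolevSq {j : ℕ} (hj : j ≤ s) (u : E → F) :
    ∫ z, ‖iteratedFDeriv ℝ j u z‖ ^ 2 ∂μ ≤ sobolevSq μ s u :=
  single_le_sum (f := fun i => ∫ z, ‖iteratedFDeriv ℝ i u z‖ ^ 2 ∂μ)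
    (fun _ _ => by positivity) (by simpa [Nat.lt_succ_iff] using hj)

lemma sobolevSq_neg (u : E → F) : sobolevSq μ s (-u) = sobolevSq μ s u := by
  simp only [sobolevSq, iteratedFDeriv_neg_apply, norm_neg]

lemma sobolevSq_const_smul {u : E → F} (hu : ContDiff ℝ s u) (c : ℝ) :
    sobolevSq μ s (c • u) = c ^ 2 * sobolevSq μ s u := by
  rw [sobolevSq, sobolevSq, mul_sum]
  refine sum_congr rfl fun i hi => ?_
  have hiu : ContDiff ℝ i u := hu.of_le (by exact_mod_cast Nat.lt_succ_iff.1 (mem_range.1 hi))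
  simp only [iteratedFDeriv_const_smul_apply hiu.contDiffAt, norm_smul, mul_pow, Real.norm_eq_abs,
    sq_abs, integral_const_mul]

lemma sobolevSq_le_of_eLpNorm_le {u : E → F} {w : E → G} {A θ : ℝ} {r : ℤ} (hA : 0 ≤ A)
    (hθ : 1 ≤ θ) (hu : ∀ j ≤ s', Integrable (fun z => ‖iteratedFDeriv ℝ j u z‖ ^ 2) μ)
    (hle : ∀ i ≤ s, ∃ j ≤ s', (i : ℤ) - j ≤ r ∧ eLpNorm (iteratedFDeriv ℝ i w) 2 μ ≤
      ENNReal.ofReal (A * θ ^ ((i : ℤ) - j)) * eLpNorm (iteratedFDeriv ℝ j u) 2 μ) :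
    sobolevSq μ s w ≤ (s + 1) * A ^ 2 * θ ^ (2 * r) * sobolevSq μ s' u := by
  have term_le : ∀ i ∈ range (s + 1), ∫ z, ‖iteratedFDeriv ℝ i w z‖ ^ 2 ∂μ ≤
      A ^ 2 * θ ^ (2 * r) * sobolevSq μ s' u := by
    intro i hi
    obtain ⟨j, hj, hjr, hij⟩ := hle i (Nat.lt_succ_iff.1 (mem_range.1 hi))
    calc _ ≤ (A * θ ^ ((i : ℤ) - j)) ^ 2 * ∫ z, ‖iteratedFDeriv ℝ j u z‖ ^ 2 ∂μ :=
          integral_norm_sq_le_of_eLpNorm_le (by positivity) (hu j hj) hij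
      _ ≤ (A * θ ^ r) ^ 2 * sobolevSq μ s' u := by
          gcongr
          exact integral_norm_iteratedFDeriv_sq_le_sobolevSq hj u
      _ = A ^ 2 * θ ^ (2 * r) * sobolevSq μ s' u := by rw [mul_pow, mul_comm 2, zpow_mul]; norm_cast
  calc sobolevSq μ s w ≤ #(range (s + 1)) • (A ^ 2 * θ ^ (2 * r) * sobolevSq μ s' u) :=
        sum_le_card_nsmul _ _ _ term_le
    _ = (s + 1) * A ^ 2 * θ ^ (2 * r) * sobolevSq μ s' u := by
        rw [card_range, nsmul_eq_mul]
        push_cast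
        ring

end SobolevNorm

section SmoothingEstimates

variable {E F : Type*} [NormedAddCommGroup E] [NormedSpace ℝ E] [MeasurableSpace E]
  [NormedAddCommGroup F] [NormedSpace ℝ F] {μ : Measure E} {f : E → ℝ} {v : E → F} {A : ℝ≥0}
  {n : ℕ} {θ : ℝ}

/-- The constant `A` dominates the `L¹` norms of the derivatives and the absolute moments of `f`, up
to order `n`, which by Minkowski's inequality control convolution with `f`. The factor `2` is the
one in `eLpNorm_iteratedFDeriv_convolution_sub_le`. -/
def KernelBound (μ : Measure E) (n : ℕ) (f : E → ℝ) (A : ℝ≥0) : Prop :=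
  ∀ m ≤ n, ∫⁻ w, ‖iteratedFDeriv ℝ m f w‖ₑ ∂μ ≤ A ∧ 2 * ∫⁻ w, ‖f w‖ₑ * ‖w‖ₑ ^ m ∂μ ≤ A

lemma KernelBound.mono {m : ℕ} {B : ℝ≥0} (h : KernelBound μ n f A) (hmn : m ≤ n) (hAB : A ≤ B) :
    KernelBound μ m f B :=
  fun k hk => (h k (hk.trans hmn)).imp (·.trans (by exact_mod_cast hAB))
    (·.trans (by exact_mod_cast hAB))

variable [BorelSpace E]

lemma exists_kernelBound [IsFiniteMeasureOnCompacts μ] (hf : ContDiff ℝ n f)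
    (hfs : HasCompactSupport f) : ∃ A : ℝ≥0, KernelBound μ n f A := by
  have lintegral_derivative_ne_top : ∀ m ∈ range (n + 1),
      ∫⁻ w, ‖iteratedFDeriv ℝ m f w‖ₑ ∂μ ≠ ⊤ := fun m hm =>
    ((hf.continuous_iteratedFDeriv (by
      exact_mod_cast Nat.lt_succ_iff.1 (mem_range.1 hm))).integrable_of_hasCompactSupport
        (hfs.iteratedFDeriv m)).hasFiniteIntegral.ne
  have lintegral_moment_ne_top (m : ℕ) : ∫⁻ w, ‖f w‖ₑ * ‖w‖ₑ ^ m ∂μ ≠ ⊤ := by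
    have hint : Integrable (fun w => f w * ‖w‖ ^ m) μ :=
      (hf.continuous.mul (continuous_norm.pow m)).integrable_of_hasCompactSupport hfs.mul_right
    simpa [enorm_mul] using hint.hasFiniteIntegral.ne
  let c (m : ℕ) : ℝ≥0∞ :=
    ∫⁻ w, ‖iteratedFDeriv ℝ m f w‖ₑ ∂μ + 2 * ∫⁻ w, ‖f w‖ₑ * ‖w‖ₑ ^ m ∂μ
  have sum_ne_top : ∑ m ∈ range (n + 1), c m ≠ ⊤ := ENNReal.sum_ne_top.2 fun m hm =>
    ENNReal.add_ne_top.2 ⟨lintegral_derivative_ne_top m hm,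
      ENNReal.mul_ne_top (by norm_num) (lintegral_moment_ne_top m)⟩
  refine ⟨(∑ m ∈ range (n + 1), c m).toNNReal, fun m hm => ?_⟩
  have term_le : c m ≤ ∑ m ∈ range (n + 1), c m :=
    single_le_sum_of_canonicallyOrdered (mem_range.2 (Nat.lt_succ_iff.2 hm))
  rw [ENNReal.coe_toNNReal sum_ne_top]
  exact ⟨le_self_add.trans term_le, le_add_self.trans term_le⟩

variable [FiniteDimensional ℝ E] [μ.IsAddHaarMeasure] {p : ℝ≥0∞} {N i j s s' : ℕ} {r : ℤ}

lemma eLpNorm_iteratedFDeriv_dilate_convolution_le (hA : KernelBound μ n f A) (hp : 1 ≤ p)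
    (hθ : 0 < θ) (hji : j ≤ i) (hin : i ≤ j + n) (hf : ContDiff ℝ n f)
    (hfs : HasCompactSupport f) (hv : ContDiff ℝ j v) :
    eLpNorm (iteratedFDeriv ℝ i (dilate θ f ⋆[lsmul ℝ ℝ, μ] v)) p μ ≤
      ENNReal.ofReal (A * θ ^ ((i : ℤ) - j)) * eLpNorm (iteratedFDeriv ℝ j v) p μ := by
  obtain ⟨m, rfl⟩ := Nat.exists_eq_add_of_le' hji
  have hm : m ≤ n := by omega
  have hfm : ContDiff ℝ m f := hf.of_le (by exact_mod_cast hm)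
  refine (eLpNorm_iteratedFDeriv_convolution_le hp (contDiff_dilate hfm θ)
    (hasCompactSupport_dilate hfs hθ.ne') hv).trans (mul_le_mul_left ?_ _)
  rw [lintegral_enorm_iteratedFDeriv_dilate hfm hθ, mul_comm, Nat.cast_add, add_sub_cancel_right,
    zpow_natCast, ENNReal.ofReal_mul A.coe_nonneg, ENNReal.ofReal_coe_nnreal,
    ENNReal.ofReal_pow hθ.le, Real.enorm_of_nonneg hθ.le]
  gcongr
  exact (hA m hm).1

lemma eLpNorm_iteratedFDeriv_dilate_convolution_sub_le [CompleteSpace F] (hA : KernelBound μ n f A)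
    (hp : 1 ≤ p) (hθ : 0 < θ) (hij : i ≤ j) (hjn : j ≤ i + n) (hjN : j ≤ i + N + 1)
    (hfN : HasVanishingMoments μ N f) (hf : Continuous f) (hfs : HasCompactSupport f)
    (hv : ContDiff ℝ j v) :
    eLpNorm (iteratedFDeriv ℝ i (dilate θ f ⋆[lsmul ℝ ℝ, μ] v - (∫ w, f w ∂μ) • v)) p μ ≤
      ENNReal.ofReal (A * θ ^ ((i : ℤ) - j)) * eLpNorm (iteratedFDeriv ℝ j v) p μ := by
  obtain ⟨k, rfl⟩ := Nat.exists_eq_add_of_le' hij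
  have hk : k ≤ n := by omega
  have hfθ : Continuous (dilate θ f) := (contDiff_dilate (contDiff_zero.2 hf) θ).continuous
  rw [← integral_dilate hθ f]
  refine (eLpNorm_iteratedFDeriv_convolution_sub_le hp (hfN.dilate hθ) (by omega) hfθ
    (hasCompactSupport_dilate hfs hθ.ne') (by exact_mod_cast hv)).trans (mul_le_mul_left ?_ _)
  have exponent_eq : (i : ℤ) - (k + i : ℕ) = -k := by push_cast; ring
  rw [lintegral_enorm_dilate_mul_enorm_pow hθ, exponent_eq, zpow_neg, zpow_natCast, ← inv_pow,
    ENNReal.ofReal_mul A.coe_nonneg, ENNReal.ofReal_coe_nnreal, ENNReal.ofReal_pow (by positivity),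
    Real.enorm_of_nonneg (by positivity), mul_left_comm, mul_comm]
  gcongr
  exact (hA k hk).2

theorem sobolevSq_dilate_convolution_le (hA : KernelBound μ s f A) (hθ : 1 ≤ θ)
    (hr : (s : ℤ) - s' ≤ r) (hr₀ : 0 ≤ r) (hf : ContDiff ℝ s f) (hfs : HasCompactSupport f)
    (hv : ContDiff ℝ s' v)
    (hvs : ∀ j ≤ s', Integrable (fun z => ‖iteratedFDeriv ℝ j v z‖ ^ 2) μ) :
    sobolevSq μ s (dilate θ f ⋆[lsmul ℝ ℝ, μ] v) ≤
      (s + 1) * A ^ 2 * θ ^ (2 * r) * sobolevSq μ s' v := by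
  refine sobolevSq_le_of_eLpNorm_le A.coe_nonneg hθ hvs fun i hi => ?_
  have hj : min i s' ≤ s' := min_le_right i s'
  exact ⟨min i s', hj, by omega, eLpNorm_iteratedFDeriv_dilate_convolution_le hA one_le_two
    (by positivity) (min_le_left i s') (by omega) hf hfs (hv.of_le (by exact_mod_cast hj))⟩

variable [CompleteSpace F]

theorem sobolevSq_dilate_convolution_sub_le (hA : KernelBound μ s' f A) (hθ : 1 ≤ θ)
    (hss' : s ≤ s') (hs' : s' ≤ N + 1) (hfN : HasVanishingMoments μ N f) (hf : Continuous f)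
    (hfs : HasCompactSupport f) (hv : ContDiff ℝ s' v)
    (hvs : ∀ j ≤ s', Integrable (fun z => ‖iteratedFDeriv ℝ j v z‖ ^ 2) μ) :
    sobolevSq μ s (dilate θ f ⋆[lsmul ℝ ℝ, μ] v - (∫ w, f w ∂μ) • v) ≤
      (s + 1) * A ^ 2 * θ ^ (2 * ((s : ℤ) - s')) * sobolevSq μ s' v :=
  sobolevSq_le_of_eLpNorm_le A.coe_nonneg hθ hvs fun i hi =>
    ⟨s', le_rfl, by omega, eLpNorm_iteratedFDeriv_dilate_convolution_sub_le hA one_le_two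
      (by positivity) (hi.trans hss') (by omega) (by omega) hfN hf hfs hv⟩

theorem sobolevSq_dilate_convolution_le_of_integral_eq_zero (hA : KernelBound μ (s + s') f A)
    (hθ : 1 ≤ θ) (hs' : s' ≤ N + 1) (hf₀ : ∫ w, f w ∂μ = 0) (hfN : HasVanishingMoments μ N f)
    (hf : ContDiff ℝ (s + s' : ℕ) f) (hfs : HasCompactSupport f) (hv : ContDiff ℝ s' v)
    (hvs : ∀ j ≤ s', Integrable (fun z => ‖iteratedFDeriv ℝ j v z‖ ^ 2) μ) :
    sobolevSq μ s (dilate θ f ⋆[lsmul ℝ ℝ, μ] v) ≤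
      (s + 1) * A ^ 2 * θ ^ (2 * ((s : ℤ) - s')) * sobolevSq μ s' v := by
  refine sobolevSq_le_of_eLpNorm_le A.coe_nonneg hθ hvs fun i hi => ⟨s', le_rfl, by omega, ?_⟩
  rcases le_total s' i with hi' | hi'
  · exact eLpNorm_iteratedFDeriv_dilate_convolution_le hA one_le_two (by positivity) hi'
      (by omega) hf hfs hv
  · simpa [hf₀] using eLpNorm_iteratedFDeriv_dilate_convolution_sub_le hA one_le_two
      (by positivity) hi' (by omega) (by omega) hfN hf.continuous hfs hv

end SmoothingEstimates

section DilationGenerator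

variable {E F : Type*} [NormedAddCommGroup E] [NormedSpace ℝ E] [NormedAddCommGroup F]
  [NormedSpace ℝ F] {f : E → ℝ} {θ : ℝ}

/-- The generator `χ = d f + w · ∇f` of the dilations of `f` on a space of dimension `d`: the
`θ`-derivative of `f_θ` is `θ⁻¹ χ_θ`. -/
def dilateGenerator (f : E → ℝ) (w : E) : ℝ :=
  finrank ℝ E * f w + fderiv ℝ f w w

lemma contDiff_dilateGenerator {n : ℕ∞ω} (hf : ContDiff ℝ (n + 1) f) :
    ContDiff ℝ n (dilateGenerator f) :=
  (contDiff_const.mul (hf.of_le le_self_add)).add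
    ((hf.fderiv_right le_rfl).clm_apply contDiff_id)

lemma hasCompactSupport_dilateGenerator (hfs : HasCompactSupport f) :
    HasCompactSupport (dilateGenerator f) :=
  hfs.mul_left.add ((hfs.fderiv ℝ).mono' fun w hw => subset_tsupport _ fun h => hw (by simp [h]))

lemma hasDerivAt_dilate (hf : Differentiable ℝ f) (hθ : θ ≠ 0) (w : E) :
    HasDerivAt (fun θ => dilate θ f w) (θ⁻¹ * dilate θ (dilateGenerator f) w) θ := by
  have hf_smul : HasDerivAt (fun θ : ℝ => f (θ • w)) (fderiv ℝ f (θ • w) w) θ := by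
    simpa [Function.comp_def] using
      (hf (θ • w)).hasFDerivAt.comp_hasDerivAt θ ((hasDerivAt_id θ).smul_const w)
  refine ((hasDerivAt_pow (finrank ℝ E) θ).mul hf_smul).congr_deriv ?_
  have pow_pred :
      (finrank ℝ E : ℝ) * θ ^ (finrank ℝ E - 1) * θ = finrank ℝ E * θ ^ finrank ℝ E := by
    rcases Nat.eq_zero_or_pos (finrank ℝ E) with h | h
    · simp [h]
    · rw [mul_assoc, pow_sub_one_mul h.ne']
  rw [dilate, dilateGenerator, map_smul, smul_eq_mul, eq_inv_mul_iff_mul_eq₀ hθ]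
  linear_combination f (θ • w) * pow_pred

lemma exists_isCompact_dilate_eq_zero (hfs : HasCompactSupport f) {a b : ℝ} (ha : 0 < a) :
    ∃ K, IsCompact K ∧ ∀ θ ∈ Icc a b, ∀ w ∉ K, dilate θ f w = 0 := by
  have pos {θ : ℝ} (hθ : θ ∈ Icc a b) : 0 < θ := ha.trans_le hθ.1
  refine ⟨(fun q : ℝ × E => q.1⁻¹ • q.2) '' (Icc a b ×ˢ tsupport f),
    (isCompact_Icc.prod hfs).image_of_continuousOn
      ((continuousOn_fst.inv₀ fun q hq => (pos hq.1).ne').smul continuousOn_snd),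
    fun θ hθ w hw => mul_eq_zero_of_right _ ?_⟩
  by_contra h
  exact hw ⟨(θ, θ • w), ⟨hθ, subset_tsupport _ h⟩, inv_smul_smul₀ (pos hθ).ne' w⟩

lemma continuous_uncurry_dilate (hf : Continuous f) :
    Continuous fun q : ℝ × E => dilate q.1 f q.2 := by
  unfold dilate
  fun_prop

variable [MeasurableSpace E] [BorelSpace E] [FiniteDimensional ℝ E]
  {μ : Measure E}

lemma hasDerivAt_integral_dilate_smul [IsFiniteMeasureOnCompacts μ] (hf : ContDiff ℝ 1 f)
    (hfs : HasCompactSupport f) (hθ : 0 < θ) {g : E → F} (hg : Continuous g) :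
    HasDerivAt (fun θ => ∫ w, dilate θ f w • g w ∂μ)
      (θ⁻¹ • ∫ w, dilate θ (dilateGenerator f) w • g w ∂μ) θ := by
  set χ := dilateGenerator f
  have hχ : Continuous χ := (contDiff_dilateGenerator (n := 0) (by simpa using hf)).continuous
  set I : Set ℝ := Icc (θ / 2) (θ + 1)
  have hI : I ∈ 𝓝 θ := Icc_mem_nhds (by linarith) (by linarith)
  have hI_pos {η : ℝ} (hη : η ∈ I) : 0 < η := (half_pos hθ).trans_le hη.1
  obtain ⟨K, hK, eq_zero_of_notMem⟩ := exists_isCompact_dilate_eq_zero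
    (hasCompactSupport_dilateGenerator hfs) (b := θ + 1) (half_pos hθ)
  have integrand_continuousOn : ContinuousOn
      (fun q : ℝ × E => (q.1⁻¹ * dilate q.1 χ q.2) • g q.2) (I ×ˢ K) := by
    have hdilate := continuous_uncurry_dilate hχ
    have hinv : ContinuousOn (fun q : ℝ × E => q.1⁻¹) (I ×ˢ K) :=
      continuousOn_fst.inv₀ fun q hq => (hI_pos hq.1).ne'
    fun_prop
  obtain ⟨C, hC⟩ := (isCompact_Icc.prod hK).exists_bound_of_continuousOn integrand_continuousOn
  have hfθ (η : ℝ) : Continuous (dilate η f) := (contDiff_dilate hf η).continuous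
  have hχθ : Continuous (dilate θ χ) := (contDiff_dilate (contDiff_zero.2 hχ) θ).continuous
  have h := (hasDerivAt_integral_of_dominated_loc_of_deriv_le (μ := μ)
    (F := fun η w => dilate η f w • g w) (F' := fun η w => (η⁻¹ * dilate η χ w) • g w)
    (bound := K.indicator fun _ => C) hI
    (Eventually.of_forall fun η => ((hfθ η).smul hg).aestronglyMeasurable)
    (((hfθ θ).smul hg).integrable_of_hasCompactSupport
      (hasCompactSupport_dilate hfs hθ.ne').smul_right)
    ((hχθ.const_mul _).smul hg).aestronglyMeasurable
    (ae_of_all _ fun w η hη => ?_)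
    ((integrable_indicator_iff hK.measurableSet).2 (integrableOn_const hK.measure_lt_top.ne))
    (ae_of_all _ fun w η hη =>
      (hasDerivAt_dilate (hf.differentiable one_ne_zero) (hI_pos hη).ne' w).smul_const (g w))).2
  · simpa only [mul_smul, integral_smul] using h
  · by_cases hw : w ∈ K
    · simpa [hw] using hC (η, w) ⟨hη, hw⟩
    · simp [hw, χ, eq_zero_of_notMem η hη w hw]

lemma hasDerivAt_dilate_convolution [IsFiniteMeasureOnCompacts μ] (hf : ContDiff ℝ 1 f)
    (hfs : HasCompactSupport f) (hθ : 0 < θ) {v : E → F} (hv : Continuous v) (z : E) :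
    HasDerivAt (fun θ => (dilate θ f ⋆[lsmul ℝ ℝ, μ] v) z)
      (θ⁻¹ • (dilate θ (dilateGenerator f) ⋆[lsmul ℝ ℝ, μ] v) z) θ :=
  hasDerivAt_integral_dilate_smul hf hfs hθ (hv.comp (continuous_const.sub continuous_id))

variable [μ.IsAddHaarMeasure]

lemma integral_dilateGenerator_mul_multilinear (hf : ContDiff ℝ 1 f) (hfs : HasCompactSupport f)
    {j : ℕ} (M : E [×j]→L[ℝ] ℝ) :
    ∫ w, dilateGenerator f w * M (fun _ => w) ∂μ = -j * ∫ w, f w * M (fun _ => w) ∂μ := by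
  have hM : Continuous fun w => M (fun _ => w) := M.cont.comp (continuous_pi fun _ => continuous_id)
  have h_generator : HasDerivAt (fun θ => ∫ w, dilate θ f w * M (fun _ => w) ∂μ)
      (∫ w, dilateGenerator f w * M (fun _ => w) ∂μ) 1 := by
    simpa [dilate] using hasDerivAt_integral_dilate_smul (μ := μ) hf hfs one_pos hM
  have h_zpow : HasDerivAt (fun θ : ℝ => θ ^ (-j : ℤ) * ∫ w, f w * M (fun _ => w) ∂μ)
      (-j * ∫ w, f w * M (fun _ => w) ∂μ) 1 := by
    simpa using (hasDerivAt_zpow (-j : ℤ) (1 : ℝ) (.inl one_ne_zero)).mul_const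
      (∫ w, f w * M (fun _ => w) ∂μ)
  refine h_generator.unique (h_zpow.congr_of_eventuallyEq ?_)
  filter_upwards [eventually_gt_nhds one_pos] with θ hθ
  rw [integral_dilate_mul_multilinear hθ, zpow_neg, zpow_natCast, inv_pow]

lemma integral_dilateGenerator (hf : ContDiff ℝ 1 f) (hfs : HasCompactSupport f) :
    ∫ w, dilateGenerator f w ∂μ = 0 := by
  simpa using integral_dilateGenerator_mul_multilinear (μ := μ) hf hfs
    (ContinuousMultilinearMap.constOfIsEmpty ℝ (fun _ : Fin 0 => E) (1 : ℝ))

lemma HasVanishingMoments.dilateGenerator {N : ℕ} (hfN : HasVanishingMoments μ N f)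
    (hf : ContDiff ℝ 1 f) (hfs : HasCompactSupport f) :
    HasVanishingMoments μ N (dilateGenerator f) := fun j hj hjN M => by
  rw [integral_dilateGenerator_mul_multilinear hf hfs, hfN j hj hjN M, mul_zero]

end DilationGenerator

section KernelExistence

lemma exists_sum_mul_pow_eq_pow {ι K : Type*} [Field K] {s : Finset ι} {x : ι → K}
    (hx : InjOn x s) (y : K) : ∃ c : ι → K, ∀ k < #s, ∑ j ∈ s, c j * x j ^ k = y ^ k := by
  classical
  refine ⟨fun j => (Lagrange.basis s x j).eval y, fun k hk => ?_⟩
  have interpolation := congrArg (Polynomial.eval y) (Lagrange.eq_interpolate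
    (f := Polynomial.X ^ k) hx (by simpa [Polynomial.degree_X_pow] using hk))
  simpa [Lagrange.interpolate_apply, Polynomial.eval_finsetSum, mul_comm] using interpolation.symm

variable {E : Type*} [NormedAddCommGroup E] [NormedSpace ℝ E] {f : E → ℝ}

lemma tsupport_dilate_subset {Λ : Set E} (hΛ : ∀ l : ℝ, 0 < l → ∀ z ∈ Λ, l • z ∈ Λ)
    (hf : tsupport f ⊆ Λ) {θ : ℝ} (hθ : 0 < θ) : tsupport (dilate θ f) ⊆ Λ := by
  intro w hw
  have hθw : θ • w ∈ tsupport f :=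
    tsupport_comp_subset_preimage f (continuous_const_smul θ) (tsupport_mul_subset_right hw)
  simpa [hθ.ne'] using hΛ θ⁻¹ (inv_pos.2 hθ) _ (hf hθw)

variable [FiniteDimensional ℝ E] [MeasurableSpace E] [BorelSpace E] {μ : Measure E}
  [μ.IsAddHaarMeasure]

lemma integral_sum_smul_dilate_mul_multilinear {ι : Type*} {s : Finset ι} {x : ι → ℝ}
    (hx : ∀ j ∈ s, 0 < x j) (c : ι → ℝ) (hf : Continuous f) (hfs : HasCompactSupport f) {k : ℕ}
    (M : E [×k]→L[ℝ] ℝ) :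
    ∫ w, (∑ j ∈ s, c j • dilate (x j)⁻¹ f) w * M (fun _ => w) ∂μ =
      (∑ j ∈ s, c j * x j ^ k) * ∫ w, f w * M (fun _ => w) ∂μ := by
  have integrable_term : ∀ j ∈ s,
      Integrable (fun w => c j * (dilate (x j)⁻¹ f w * M (fun _ => w))) μ := fun j hj =>
    (integrable_smul_multilinear (contDiff_dilate (contDiff_zero.2 hf) _).continuous
      (hasCompactSupport_dilate hfs (inv_ne_zero (hx j hj).ne')) M).const_mul (c j)
  simp only [Finset.sum_apply, Pi.smul_apply, smul_eq_mul, sum_mul, mul_assoc]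
  rw [integral_finsetSum _ integrable_term]
  refine sum_congr rfl fun j hj => ?_
  rw [integral_const_mul, integral_dilate_mul_multilinear (inv_pos.2 (hx j hj)), inv_inv]

theorem exists_hasVanishingMoments_tsupport_subset {Λ : Set E}
    (hΛ : ∀ l : ℝ, 0 < l → ∀ z ∈ Λ, l • z ∈ Λ) (hΛ_int : (interior Λ).Nonempty) (N : ℕ) :
    ∃ ψ : E → ℝ, ContDiff ℝ ∞ ψ ∧ HasCompactSupport ψ ∧ tsupport ψ ⊆ Λ ∧ ∫ w, ψ w ∂μ = 1 ∧
      HasVanishingMoments μ N ψ := by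
  obtain ⟨z₀, hz₀⟩ := hΛ_int
  obtain ⟨r, hr, hball⟩ := Metric.nhds_basis_closedBall.mem_iff.1 (mem_interior_iff_mem_nhds.1 hz₀)
  let B : ContDiffBump z₀ := ⟨r / 2, r, half_pos hr, half_lt_self hr⟩
  have hφ : ContDiff ℝ ∞ (B.normed μ) := B.contDiff_normed
  have hφs : HasCompactSupport (B.normed μ) := B.hasCompactSupport_normed
  have hφΛ : tsupport (B.normed μ) ⊆ Λ := B.tsupport_normed_eq.trans_subset hball
  let x (j : ℕ) : ℝ := j + 1
  have hx (j : ℕ) : 0 < x j := by positivity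
  obtain ⟨c, hc⟩ := exists_sum_mul_pow_eq_pow (s := range (N + 1)) (x := x)
    (fun i _ j _ hij => by simpa [x] using hij) 0
  have moment {k : ℕ} (hk : k ≤ N) (M : E [×k]→L[ℝ] ℝ) :
      ∫ w, (∑ j ∈ range (N + 1), c j • dilate (x j)⁻¹ (B.normed μ)) w * M (fun _ => w) ∂μ =
        0 ^ k * ∫ w, B.normed μ w * M (fun _ => w) ∂μ := by
    rw [integral_sum_smul_dilate_mul_multilinear (fun j _ => hx j) c hφ.continuous hφs,
      hc k (by simpa [Nat.lt_succ_iff] using hk)]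
  refine ⟨∑ j ∈ range (N + 1), c j • dilate (x j)⁻¹ (B.normed μ), ?_, ?_, ?_, ?_, ?_⟩
  · rw [Finset.sum_fn]
    exact ContDiff.sum fun j _ => (contDiff_dilate hφ _).const_smul (c j)
  · exact HasCompactSupport.finset_sum fun j _ =>
      (hasCompactSupport_dilate hφs (inv_ne_zero (hx j).ne')).smul_left
  · refine sum_induction _ (fun g => tsupport g ⊆ Λ)
      (fun g h hg hh => (tsupport_add g h).trans (union_subset hg hh)) (by simp [tsupport]) ?_
    exact fun j _ => (closure_mono (support_const_smul_subset _ _)).trans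
      (tsupport_dilate_subset hΛ hφΛ (inv_pos.2 (hx j)))
  · simpa [B.integral_normed] using moment (Nat.zero_le N)
      (ContinuousMultilinearMap.constOfIsEmpty ℝ (fun _ : Fin 0 => E) (1 : ℝ))
  · exact fun k hk hkN M => by rw [moment hkN, zero_pow (by omega), zero_mul]

end KernelExistence

section GeneralTheorem

variable {E : Type*} [NormedAddCommGroup E] [NormedSpace ℝ E] [FiniteDimensional ℝ E]
  [MeasurableSpace E] [BorelSpace E] {μ : Measure E} [μ.IsAddHaarMeasure]

theorem sobolevSq_deriv_dilate_convolution_le {F : Type*} [NormedAddCommGroup F] [NormedSpace ℝ F]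
    [CompleteSpace F] {f : E → ℝ} {v : E → F} {A : ℝ≥0} {N s s' : ℕ} {θ : ℝ}
    (hA : KernelBound μ (s + s') (dilateGenerator f) A) (hθ : 1 ≤ θ) (hs' : s' ≤ N + 1)
    (hfN : HasVanishingMoments μ N f) (hf : ContDiff ℝ (s + s' + 1 : ℕ) f)
    (hfs : HasCompactSupport f) (hv : ContDiff ℝ s' v)
    (hvs : ∀ j ≤ s', Integrable (fun z => ‖iteratedFDeriv ℝ j v z‖ ^ 2) μ) :
    sobolevSq μ s (fun z => deriv (fun η => (dilate η f ⋆[lsmul ℝ ℝ, μ] v) z) θ) ≤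
      (s + 1) * A ^ 2 * θ ^ (2 * ((s : ℤ) - s' - 1)) * sobolevSq μ s' v := by
  have hθ₀ : 0 < θ := by positivity
  have hf₁ : ContDiff ℝ 1 f := hf.of_le (by norm_cast; omega)
  have hχ : ContDiff ℝ (s + s' : ℕ) (dilateGenerator f) := contDiff_dilateGenerator hf
  have hχs : HasCompactSupport (dilateGenerator f) := hasCompactSupport_dilateGenerator hfs
  have hconv : ContDiff ℝ s (dilate θ (dilateGenerator f) ⋆[lsmul ℝ ℝ, μ] v) :=
    (hasCompactSupport_dilate hχs hθ₀.ne').contDiff_convolution_left _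
      (contDiff_dilate (hχ.of_le (by norm_cast; omega)) θ) hv.continuous.locallyIntegrable
  have deriv_eq : (fun z => deriv (fun η => (dilate η f ⋆[lsmul ℝ ℝ, μ] v) z) θ) =
      θ⁻¹ • (dilate θ (dilateGenerator f) ⋆[lsmul ℝ ℝ, μ] v) :=
    funext fun z => (hasDerivAt_dilate_convolution hf₁ hfs hθ₀ hv.continuous z).deriv
  calc _ ≤ θ⁻¹ ^ 2 * ((s + 1) * A ^ 2 * θ ^ (2 * ((s : ℤ) - s')) * sobolevSq μ s' v) := by
        rw [deriv_eq, sobolevSq_const_smul hconv]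
        gcongr
        exact sobolevSq_dilate_convolution_le_of_integral_eq_zero hA hθ hs'
          (integral_dilateGenerator hf₁ hfs) (hfN.dilateGenerator hf₁ hfs) hχ hχs hv hvs
    _ = _ := by
        have exponent_eq : 2 * ((s : ℤ) - s' - 1) = 2 * ((s : ℤ) - s') - 2 := by ring
        rw [exponent_eq, zpow_sub₀ hθ₀.ne']
        norm_cast
        ring

theorem smoothing_operators_general {Λ : Set E} (hΛ : ∀ l : ℝ, 0 < l → ∀ z ∈ Λ, l • z ∈ Λ)
    (hΛ_int : (interior Λ).Nonempty) (N : ℕ) :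
    ∃ ψ : 𝓢(E, ℝ), HasCompactSupport ψ ∧ tsupport ψ ⊆ Λ ∧ ∫ z, ψ z ∂μ = 1 ∧
      HasVanishingMoments μ N ψ ∧
      ∀ s s' : ℕ, s' ≤ N + 1 → ∃ C : ℝ, 0 < C ∧
        ∀ {F : Type*} [NormedAddCommGroup F] [NormedSpace ℝ F] [CompleteSpace F] (u : E → F),
          ContDiff ℝ s' u →
          (∀ i ≤ s', Integrable (fun z => ‖iteratedFDeriv ℝ i u z‖ ^ 2) μ) →
          ∀ θ : ℝ, 1 ≤ θ →
            (s ≤ s' → sobolevSq μ s (dilate θ ψ ⋆[lsmul ℝ ℝ, μ] u) ≤ C * sobolevSq μ s' u) ∧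
            (s' ≤ s → sobolevSq μ s (dilate θ ψ ⋆[lsmul ℝ ℝ, μ] u) ≤
              C * θ ^ (2 * ((s : ℤ) - s')) * sobolevSq μ s' u) ∧
            (s ≤ s' → sobolevSq μ s (u - dilate θ ψ ⋆[lsmul ℝ ℝ, μ] u) ≤
              C * θ ^ (2 * ((s : ℤ) - s')) * sobolevSq μ s' u) ∧
            (∀ z, DifferentiableAt ℝ (fun η => (dilate η ψ ⋆[lsmul ℝ ℝ, μ] u) z) θ) ∧
            sobolevSq μ s (fun z => deriv (fun η => (dilate η ψ ⋆[lsmul ℝ ℝ, μ] u) z) θ) ≤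
              C * θ ^ (2 * ((s : ℤ) - s' - 1)) * sobolevSq μ s' u := by
  obtain ⟨ψ, hψ, hψs, hψΛ, hψ₁, hψN⟩ :=
    exists_hasVanishingMoments_tsupport_subset (μ := μ) hΛ hΛ_int N
  refine ⟨hψs.toSchwartzMap hψ, hψs, hψΛ, hψ₁, hψN, fun s s' hs' => ?_⟩
  have hψn (n : ℕ) : ContDiff ℝ n ψ := hψ.of_le (by exact_mod_cast le_top)
  obtain ⟨A, hA⟩ := exists_kernelBound (μ := μ) (hψn (s + s')) hψs
  obtain ⟨B, hB⟩ := exists_kernelBound (μ := μ) (n := s + s')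
    (contDiff_dilateGenerator (hψn (s + s' + 1))) (hasCompactSupport_dilateGenerator hψs)
  set D : ℝ≥0 := A + B + 1
  have hAD : A ≤ D := le_self_add.trans le_self_add
  have hBD : B ≤ D := le_add_self.trans le_self_add
  refine ⟨(s + 1) * D ^ 2, by positivity, fun u hu hus θ hθ =>
    ⟨fun hss' => ?_, fun hs's => ?_, fun hss' => ?_, fun z => ?_, ?_⟩⟩
  · exact (sobolevSq_dilate_convolution_le (hA.mono le_self_add hAD) hθ (r := 0) (by omega) le_rfl
      (hψn s) hψs hu hus).trans_eq (by simp)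
  · exact sobolevSq_dilate_convolution_le (hA.mono le_self_add hAD) hθ le_rfl (by omega) (hψn s)
      hψs hu hus
  · have error_le := sobolevSq_dilate_convolution_sub_le (hA.mono le_add_self hAD) hθ hss' hs' hψN
      hψ.continuous hψs hu hus
    rw [hψ₁, one_smul, ← sobolevSq_neg, neg_sub] at error_le
    exact error_le
  · exact (hasDerivAt_dilate_convolution (hψn 1) hψs (by positivity) hu.continuous
      z).differentiableAt
  · exact sobolevSq_deriv_dilate_convolution_le (hB.mono le_rfl hBD) hθ hs' hψN (hψn _) hψs hu hus

end GeneralTheorem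

section Quadrant

instance isAddHaarMeasure_volume_prod {G H : Type*} [AddGroup G] [TopologicalSpace G]
    [MeasureSpace G] [(volume : Measure G).IsAddHaarMeasure] [SFinite (volume : Measure G)]
    [MeasurableAdd G] [AddGroup H] [TopologicalSpace H] [MeasureSpace H]
    [(volume : Measure H).IsAddHaarMeasure] [SFinite (volume : Measure H)] [MeasurableAdd H] :
    (volume : Measure (G × H)).IsAddHaarMeasure :=
  Measure.prod.instIsAddHaarMeasure volume volume

lemma smul_mem_quadrant (l : ℝ) (hl : 0 < l) :
    ∀ z ∈ {z : ℝ × ℝ × ℝ | 0 ≤ z.2.2 ∧ z.1 ≤ 0}, l • z ∈ {z : ℝ × ℝ × ℝ | 0 ≤ z.2.2 ∧ z.1 ≤ 0} :=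
  fun _ hz => ⟨mul_nonneg hl.le hz.1, mul_nonpos_of_nonneg_of_nonpos hl.le hz.2⟩

lemma interior_quadrant_nonempty : (interior {z : ℝ × ℝ × ℝ | 0 ≤ z.2.2 ∧ z.1 ≤ 0}).Nonempty := by
  have isOpen_lt_and_lt : IsOpen {z : ℝ × ℝ × ℝ | 0 < z.2.2 ∧ z.1 < 0} := by
    rw [ofPred_and]
    exact (isOpen_lt (by fun_prop) (by fun_prop)).inter (isOpen_lt (by fun_prop) (by fun_prop))
  exact ⟨(-1, 0, 1), mem_interior.2 ⟨_, fun _ hz => ⟨hz.1.le, hz.2.le⟩, isOpen_lt_and_lt,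
    by norm_num⟩⟩

lemma smoothOp_eq_convolution (ψ : ℝ × ℝ × ℝ → ℝ) (θ : ℝ) (u : ℝ × ℝ × ℝ → ℝ) :
    smoothOp ψ θ u = dilate θ ψ ⋆[lsmul ℝ ℝ, volume] u := by
  ext z
  simp [smoothOp, convolution_def, dilate]

lemma HasVanishingMoments.integral_mul_prod_eq_zero {E : Type*} [NormedAddCommGroup E]
    [NormedSpace ℝ E] [MeasurableSpace E] {μ : Measure E} {N j : ℕ} {f : E → ℝ}
    (hfN : HasVanishingMoments μ N f) (hj : 1 ≤ j) (hjN : j ≤ N) (L : Fin j → E →L[ℝ] ℝ) :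
    ∫ w, f w * ∏ i, L i w ∂μ = 0 := by
  simpa using hfN j hj hjN
    ((ContinuousMultilinearMap.mkPiAlgebra ℝ (Fin j) ℝ).compContinuousLinearMap L)

lemma HasVanishingMoments.integral_monomial_mul_eq_zero {N a b c : ℕ} {f : ℝ × ℝ × ℝ → ℝ}
    (hfN : HasVanishingMoments volume N f) (h : 1 ≤ a + b + c) (hN : a + b + c ≤ N) :
    ∫ z : ℝ × ℝ × ℝ, z.1 ^ a * z.2.1 ^ b * z.2.2 ^ c * f z = 0 := by
  let x : ℝ × ℝ × ℝ →L[ℝ] ℝ := .fst ℝ ℝ (ℝ × ℝ)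
  let y : ℝ × ℝ × ℝ →L[ℝ] ℝ := .fst ℝ ℝ ℝ ∘L .snd ℝ ℝ (ℝ × ℝ)
  let t : ℝ × ℝ × ℝ →L[ℝ] ℝ := .snd ℝ ℝ ℝ ∘L .snd ℝ ℝ (ℝ × ℝ)
  simpa [Fin.prod_univ_add, mul_comm, x, y, t] using hfN.integral_mul_prod_eq_zero h hN
    (Fin.append (Fin.append (fun _ : Fin a => x) fun _ : Fin b => y) fun _ : Fin c => t)

end Quadrant

/-- **Smoothing operators respecting flatness** (Section III.4.1): there is a Schwartz
function `ψ` supported in `{t ≥ 0, x ≤ 0}`, of integral 1 and with vanishing moments up to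
order `s̄`, whose associated mollifiers `S_θ` satisfy the usual four smoothing estimates
in the `H^s` scales, `0 ≤ s, s′ ≤ s̄`.  (The estimates are stated for squared norms.) -/
theorem smoothing_operators (sbar : ℕ) :
    ∃ ψ : SchwartzMap (ℝ × ℝ × ℝ) ℝ,
      tsupport (ψ : ℝ × ℝ × ℝ → ℝ) ⊆ {z : ℝ × ℝ × ℝ | 0 ≤ z.2.2 ∧ z.1 ≤ 0} ∧
      (∫ z : ℝ × ℝ × ℝ, ψ z) = 1 ∧
      (∀ a b c : ℕ, 1 ≤ a + b + c → a + b + c ≤ sbar →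
        (∫ z : ℝ × ℝ × ℝ, z.1 ^ a * z.2.1 ^ b * z.2.2 ^ c * ψ z) = 0) ∧
      ∀ s s' : ℕ, s ≤ sbar → s' ≤ sbar →
        ∃ C : ℝ, 0 < C ∧
          ∀ u : ℝ × ℝ × ℝ → ℝ, ContDiff ℝ (⊤ : ℕ∞) u →
            (∀ i : ℕ, i ≤ s' →
              Integrable (fun z : ℝ × ℝ × ℝ => ‖iteratedFDeriv ℝ i u z‖ ^ 2)) →
            ∀ θ : ℝ, 1 ≤ θ →
              (s ≤ s' →
                SobSq s (smoothOp (fun z => ψ z) θ u) ≤ C * SobSq s' u) ∧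
              (s' ≤ s →
                SobSq s (smoothOp (fun z => ψ z) θ u) ≤
                  C * θ ^ (2 * ((s : ℤ) - s')) * SobSq s' u) ∧
              (s ≤ s' →
                SobSq s (fun z => u z - smoothOp (fun z' => ψ z') θ u z) ≤
                  C * θ ^ (2 * ((s : ℤ) - s')) * SobSq s' u) ∧
              SobSq s (fun z => deriv (fun ϑ => smoothOp (fun z' => ψ z') ϑ u z) θ) ≤
                C * θ ^ (2 * ((s : ℤ) - s' - 1)) * SobSq s' u := by
  obtain ⟨ψ, -, hψ_support, hψ_integral, hψ_moments, estimates⟩ :=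
    smoothing_operators_general (μ := volume) smul_mem_quadrant interior_quadrant_nonempty sbar
  refine ⟨ψ, hψ_support, hψ_integral,
    fun a b c h hN => hψ_moments.integral_monomial_mul_eq_zero h hN, fun s s' _ hs' => ?_⟩
  obtain ⟨C, hC, estimates⟩ := estimates s s' (hs'.trans sbar.le_succ)
  refine ⟨C, hC, fun u hu hus θ hθ => ?_⟩
  obtain ⟨bounded, growth, error, -, derivative⟩ :=
    estimates u (hu.of_le (by exact_mod_cast le_top)) hus θ hθ
  simp only [smoothOp_eq_convolution]
  exact ⟨bounded, growth, error, derivative⟩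

end
end
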